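/- arXiv:2009.03609 — 5 statements merged into one kernel-verified Lean document; each statement's English description precedes it below -/
import Mathlib

section
/- If P = (p1,p2) is b-visible from Q = (q1,q2) along the curve a1(y−q2)^{b1} = a2(x−q1)^{b2}, then Q is b-visible from P along the curve a1(y−p2)^{b1} = (−1)^{b1+b2} a2(x−p1)^{b2}; in particular b-visibility is a symmetric relation. -/
/-- The point `R` lies on the curve `a1 (y - Q.2)^{b1} = a2 (x - Q.1)^{b2}`. -/
def OnCurve (b1 b2 : ℕ) (a1 a2 : ℚ) (Q R : ℤ × ℤ) : Prop :=
  a1 * ((R.2 : ℚ) - (Q.2 : ℚ)) ^ b1 = a2 * ((R.1 : ℚ) - (Q.1 : ℚ)) ^ b2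

/-- The point `R` lies in the coordinate box spanned by `P` and `Q`. -/
def BetweenPts (P Q R : ℤ × ℤ) : Prop :=
  (min P.1 Q.1 ≤ R.1 ∧ R.1 ≤ max P.1 Q.1) ∧ (min P.2 Q.2 ≤ R.2 ∧ R.2 ≤ max P.2 Q.2)

/-- Reflecting a curve equation through the midpoint multiplies it by signs. -/
theorem reflect_curve (b1 b2 : ℕ) (a1 a2 u v : ℚ) :
    a1 * u ^ b1 = (-1 : ℚ) ^ (b1 + b2) * a2 * v ^ b2 ↔ a1 * (-u) ^ b1 = a2 * (-v) ^ b2 := by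
  rw [neg_pow u, neg_pow v, pow_add]
  rcases neg_one_pow_eq_or ℚ b1 with h1 | h1 <;> rcases neg_one_pow_eq_or ℚ b2 with h2 | h2 <;>
    rw [h1, h2] <;> constructor <;> intro h <;> linarith

/-- If `P` is b-visible from `Q` along the curve `a1 (y-q2)^{b1} = a2 (x-q1)^{b2}`, then `Q`
is b-visible from `P` along the curve `a1 (y-p2)^{b1} = (-1)^{b1+b2} a2 (x-p1)^{b2}`. -/
theorem stmt_5 (b1 b2 : ℕ) (hb1 : 0 < b1) (hb2 : 0 < b2) (P Q : ℤ × ℤ) (a1 a2 : ℚ)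
    (ha : (a1, a2) ≠ (0, 0)) (hPQ : OnCurve b1 b2 a1 a2 Q P)
    (hvis : ∀ R : ℤ × ℤ, OnCurve b1 b2 a1 a2 Q R → BetweenPts P Q R → R = P ∨ R = Q) :
    (a1, (-1 : ℚ) ^ (b1 + b2) * a2) ≠ (0, 0) ∧
      OnCurve b1 b2 a1 ((-1 : ℚ) ^ (b1 + b2) * a2) P Q ∧
      ∀ R : ℤ × ℤ, OnCurve b1 b2 a1 ((-1 : ℚ) ^ (b1 + b2) * a2) P R →
        BetweenPts Q P R → R = Q ∨ R = P := by
  refine ⟨?_, ?_, ?_⟩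
  · intro h
    apply ha
    simpa using h
  · unfold OnCurve at *
    rw [reflect_curve]
    simpa only [neg_sub] using hPQ
  · intro R hR hB
    have hR' : OnCurve b1 b2 a1 a2 Q (P + Q - R) := by
      unfold OnCurve at *
      rw [reflect_curve] at hR
      simp only [Prod.fst_sub, Prod.snd_sub, Prod.fst_add, Prod.snd_add]
      push_cast
      convert hR using 3 <;> ring
    have hB' : BetweenPts P Q (P + Q - R) := by
      unfold BetweenPts at *
      simp only [Prod.fst_sub, Prod.snd_sub, Prod.fst_add, Prod.snd_add]
      omega
    rcases hvis _ hR' hB' with h | h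
    · left
      have h3 : P + Q - R = P + Q - Q := by rw [h]; abel
      exact sub_right_injective h3
    · right
      have h3 : P + Q - R = P + Q - P := by rw [h]; abel
      exact sub_right_injective h3
end

section
/- Let J ≥ 1 and let s = (s_1,...,s_J) be integers, and suppose b1 ≤ b2 and J < 2^{b1+b2}. Define f_{b,s}(n) = Σ μ(d_1)···μ(d_J)/(d_1···d_J)^{b2}, the sum over tuples (d_1,...,d_J) of positive integers with d_j^{b1} | n − s_j for all j and gcd(d_{j1}, d_{j2}) = 1 for all j1 ≠ j2. Then for x ≥ 2, Σ_{n ≤ x} f_{b,s}(n) = x·Π_p (1 − J·p^{−(b1+b2)}) + O((log x)^J), with implied constant depending on b and s. -/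
open Finset Real
open scoped Classical

/-- `f_{b,s}(n) = ∑ μ(d_1)⋯μ(d_J)/(d_1⋯d_J)^{b2}`, summed over tuples of pairwise coprime
positive integers `d_j` with `d_j^{b1} ∣ n - s_j` for all `j`. -/
noncomputable def fbs (b1 b2 J : ℕ) (s : Fin J → ℤ) (n : ℤ) : ℝ :=
  ∑' d : Fin J → ℕ,
    if (∀ j, 0 < d j ∧ ((d j : ℤ)) ^ b1 ∣ n - s j) ∧
        (∀ j1 j2, j1 ≠ j2 → Nat.Coprime (d j1) (d j2)) then
      (∏ j, (ArithmeticFunction.moebius (d j) : ℝ)) / (∏ j, (d j : ℝ)) ^ b2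
    else 0


lemma aux_term (b1 b2 J : ℕ) (s : Fin J → ℤ) (n : ℤ) (d : Fin J → ℕ) :
    (if (∀ j, 0 < d j ∧ ((d j : ℤ)) ^ b1 ∣ n - s j) ∧
        (∀ j1 j2, j1 ≠ j2 → Nat.Coprime (d j1) (d j2)) then
      (∏ j, (ArithmeticFunction.moebius (d j) : ℝ)) / (∏ j, (d j : ℝ)) ^ b2
    else 0) =
    if (∀ j, ((d j : ℤ)) ^ b1 ∣ n - s j) then
      (ArithmeticFunction.moebius (∏ j, d j) : ℝ) / ((∏ j, d j : ℕ) : ℝ) ^ b2 else 0 := by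
  by_cases h2 : ∀ j1 j2, j1 ≠ j2 → Nat.Coprime (d j1) (d j2)
  · have hmu : ArithmeticFunction.moebius (∏ j, d j) = ∏ j, ArithmeticFunction.moebius (d j) :=
      ArithmeticFunction.IsMultiplicative.map_prod d
        ArithmeticFunction.isMultiplicative_moebius univ (fun i _ j _ hij => h2 i j hij)
    by_cases h0 : ∀ j, 0 < d j
    · rw [hmu]
      push_cast
      congr 1
      simp only [h0, true_and, eq_iff_iff]
      exact ⟨fun h => h.1, fun h => ⟨h, h2⟩⟩
    · rw [if_neg (fun h => h0 (fun j => (h.1 j).1))]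
      push Not at h0
      obtain ⟨j, hj⟩ := h0
      have : ∏ j, d j = 0 := Finset.prod_eq_zero (mem_univ j) (by omega)
      rw [this]; simp
  · rw [if_neg (fun h => h2 h.2)]
    have : ¬ Squarefree (∏ j, d j) := by
      intro hs
      apply h2
      intro j1 j2 hj
      have hdvd : d j1 * d j2 ∣ ∏ j, d j := by
        rw [← Finset.prod_pair hj]
        exact Finset.prod_dvd_prod_of_subset _ _ _ (subset_univ _)
      exact (Nat.squarefree_mul_iff.1 (hs.squarefree_of_dvd hdvd)).1
    rw [ArithmeticFunction.moebius_eq_zero_of_not_squarefree this]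
    simp

lemma aux_pi_sum_le (J : ℕ) (w : ℕ → ℝ) (hw0 : ∀ d, 0 ≤ w d) (hw : Summable w)
    (u : Finset (Fin J → ℕ)) : ∑ d ∈ u, ∏ j, w (d j) ≤ (∑' d, w d) ^ J := by
  have hsub : u ⊆ Fintype.piFinset (fun _ : Fin J => (u.biUnion (fun d => univ.image d))) := by
    intro d hd
    rw [Fintype.mem_piFinset]
    intro j
    rw [mem_biUnion]
    exact ⟨d, hd, mem_image_of_mem _ (mem_univ j)⟩
  calc _ ≤ ∑ d ∈ Fintype.piFinset (fun _ : Fin J => (u.biUnion (fun d => univ.image d))),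
        ∏ j, w (d j) :=
        sum_le_sum_of_subset_of_nonneg hsub (fun d _ _ => prod_nonneg (fun j _ => hw0 _))
    _ = (∑ i ∈ u.biUnion (fun d => univ.image d), w i) ^ J := by
        rw [← Finset.prod_univ_sum]; simp
    _ ≤ _ := by
        gcongr
        · exact sum_nonneg (fun i _ => hw0 i)
        · exact hw.sum_le_tsum _ (fun i _ => hw0 i)

lemma aux_pi_summable (J : ℕ) (w : ℕ → ℝ) (hw0 : ∀ d, 0 ≤ w d) (hw : Summable w) :
    Summable (fun d : Fin J → ℕ => ∏ j, w (d j)) :=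
  summable_of_sum_le (fun d => prod_nonneg (fun j _ => hw0 _)) (aux_pi_sum_le J w hw0 hw)

lemma aux_w_summable (k : ℕ) (hk : 2 ≤ k) : Summable (fun d : ℕ => 1 / (d : ℝ) ^ k) :=
  Real.summable_one_div_nat_pow.2 (by omega)

lemma aux_abs_le (J k : ℕ) (d : Fin J → ℕ) :
    |(ArithmeticFunction.moebius (∏ j, d j) : ℝ) / ((∏ j, d j : ℕ) : ℝ) ^ k| ≤
      ∏ j, (1 / (d j : ℝ) ^ k) := by
  have h : |(ArithmeticFunction.moebius (∏ j, d j) : ℝ)| ≤ 1 := by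
    exact_mod_cast ArithmeticFunction.abs_moebius_le_one (n := ∏ j, d j)
  rw [abs_div, abs_of_nonneg (by positivity : (0:ℝ) ≤ ((∏ j, d j : ℕ) : ℝ) ^ k),
    Finset.prod_div_distrib, Finset.prod_pow]
  push_cast
  simp only [prod_const_one]
  gcongr

lemma aux_h_summable (J k : ℕ) (hk : 2 ≤ k) : Summable (fun d : Fin J → ℕ =>
    |(ArithmeticFunction.moebius (∏ j, d j) : ℝ) / ((∏ j, d j : ℕ) : ℝ) ^ k|) :=
  Summable.of_nonneg_of_le (fun _ => abs_nonneg _) (aux_abs_le J k)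
    (aux_pi_summable J (fun d : ℕ => 1 / (d : ℝ) ^ k) (fun d => by positivity)
      (aux_w_summable k hk))

lemma aux_fiber (J : ℕ) (φ : ℕ → ℝ) (hφ : ∀ m, ¬ Squarefree m → φ m = 0) (m : ℕ) :
    ∑' d : ((fun d : Fin J → ℕ => ∏ j, d j) ⁻¹' {m}), φ (∏ j, d.1 j) =
      (J : ℝ) ^ (ArithmeticFunction.cardDistinctFactors m) * φ m := by
  have h1 : ∀ d : ((fun d : Fin J → ℕ => ∏ j, d j) ⁻¹' {m}), φ (∏ j, d.1 j) = φ m := by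
    intro d
    have := d.2
    simp only [Set.mem_preimage, Set.mem_singleton_iff] at this
    rw [this]
  simp_rw [h1]
  by_cases hm : Squarefree m
  · have hset : ((fun d : Fin J → ℕ => ∏ j, d j) ⁻¹' {m}) = (Nat.finMulAntidiag J m : Set _) := by
      ext d
      simp [Nat.mem_finMulAntidiag, hm.ne_zero]
    rw [hset, Finset.tsum_subtype' (Nat.finMulAntidiag J m) (fun _ => φ m), sum_const,
      Nat.card_finMulAntidiag_of_squarefree hm]
    simp
  · simp [hφ m hm]

lemma aux_euler (J k : ℕ) (hk : 2 ≤ k) :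
    ∑' d : Fin J → ℕ, (ArithmeticFunction.moebius (∏ j, d j) : ℝ) / ((∏ j, d j : ℕ) : ℝ) ^ k =
      ∏' p : Nat.Primes, (1 - (J : ℝ) / (p : ℝ) ^ k) := by
  set φ : ℕ → ℝ := fun m => (ArithmeticFunction.moebius m : ℝ) / (m : ℝ) ^ k with hφ
  have hφ0 : ∀ m, ¬ Squarefree m → φ m = 0 := fun m hm => by
    simp [hφ, ArithmeticFunction.moebius_eq_zero_of_not_squarefree hm]
  have hs := aux_h_summable J k hk
  have hs' := hs.of_abs
  have e1 := hs.hasSum.tsum_fiberwise (fun d : Fin J → ℕ => ∏ j, d j)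
  have e2 := hs'.hasSum.tsum_fiberwise (fun d : Fin J → ℕ => ∏ j, d j)
  have e1' : (fun c : ℕ => ∑' d : ((fun d : Fin J → ℕ => ∏ j, d j) ⁻¹' {c}),
      |(ArithmeticFunction.moebius (∏ j, d.1 j) : ℝ) / ((∏ j, d.1 j : ℕ) : ℝ) ^ k|) =
      fun c => ‖(J : ℝ) ^ (ArithmeticFunction.cardDistinctFactors c) * φ c‖ := by
    funext c
    have := aux_fiber J (fun m => |φ m|) (fun m hm => by simp [hφ0 m hm]) c
    rw [norm_mul, Real.norm_eq_abs (φ c), norm_pow, Real.norm_natCast]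
    exact this
  have e2' : (fun c : ℕ => ∑' d : ((fun d : Fin J → ℕ => ∏ j, d j) ⁻¹' {c}),
      (ArithmeticFunction.moebius (∏ j, d.1 j) : ℝ) / ((∏ j, d.1 j : ℕ) : ℝ) ^ k) =
      fun c => (J : ℝ) ^ (ArithmeticFunction.cardDistinctFactors c) * φ c := by
    funext c
    exact aux_fiber J φ hφ0 c
  rw [e1'] at e1
  rw [e2'] at e2
  rw [← e2.tsum_eq]
  have hE := EulerProduct.eulerProduct_hasProd
    (f := fun c : ℕ => (J : ℝ) ^ (ArithmeticFunction.cardDistinctFactors c) * φ c)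
    (by simp [hφ]) (by
      intro m n hmn
      simp only [hφ]
      rw [ArithmeticFunction.cardDistinctFactors_mul hmn,
        ArithmeticFunction.isMultiplicative_moebius.map_mul_of_coprime hmn]
      push_cast
      rw [pow_add, mul_pow]
      rw [mul_div_mul_comm]
      ring) e1.summable (by simp [hφ])
  rw [← hE.tprod_eq]
  congr 1
  funext p
  have hp : Nat.Prime p := p.2
  rw [tsum_eq_sum (s := range 2)]
  · simp [sum_range_succ, hφ, ArithmeticFunction.cardDistinctFactors_apply_prime hp,
      ArithmeticFunction.moebius_apply_prime hp]
    ring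
  · intro e he
    have he2 : 2 ≤ e := by
      simp at he
      omega
    simp only [hφ]
    rw [ArithmeticFunction.moebius_apply_prime_pow hp (by omega), if_neg (by omega)]
    simp

lemma aux_tail (b1 b2 : ℕ) (hb1 : 0 < b1) (hb2 : 0 < b2) (hb : b1 ≤ b2) :
    ∃ C : ℝ, 0 ≤ C ∧ ∀ T : ℕ, 1 ≤ T →
      (T : ℝ) * (∑' d : ℕ, 1 / (d : ℝ) ^ (b1 + b2) -
        ∑ d ∈ (Icc 1 T).filter (fun d => d ^ b1 ≤ T), 1 / (d : ℝ) ^ (b1 + b2)) ≤ C := by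
  suffices h : ∃ C : ℝ, 0 ≤ C ∧ ∀ T : ℕ, 1 ≤ T → ∀ u : Finset ℕ, (∀ d ∈ u, T < d ^ b1) →
      (T : ℝ) * ∑ d ∈ u, 1 / (d : ℝ) ^ (b1 + b2) ≤ C by
    obtain ⟨C, hC, h⟩ := h
    refine ⟨C, hC, fun T hT => ?_⟩
    have hT0 : (0 : ℝ) < T := by exact_mod_cast hT
    set D := (Icc 1 T).filter (fun d => d ^ b1 ≤ T) with hD
    rw [← le_div_iff₀' hT0, sub_le_iff_le_add']
    refine Real.tsum_le_of_sum_le (fun d => by positivity) (fun u => ?_)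
    rw [← Finset.sum_inter_add_sum_sdiff u D]
    apply add_le_add
    · exact sum_le_sum_of_subset_of_nonneg inter_subset_right (fun d _ _ => by positivity)
    · rw [le_div_iff₀' hT0]
      refine le_trans (le_of_eq ?_) (h T hT ((u \ D).filter (fun d => d ≠ 0)) ?_)
      · congr 1
        rw [sum_filter]
        refine sum_congr rfl (fun d _ => ?_)
        split_ifs with h0
        · rfl
        · have : d = 0 := by simpa using h0
          subst this
          rw [Nat.cast_zero, zero_pow (by omega)]; simp
      · intro d hd
        simp only [hD, mem_filter, mem_sdiff, mem_Icc, not_and, not_le] at hd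
        by_cases hdT : d ≤ T
        · exact hd.1.2 ⟨by omega, hdT⟩
        · exact lt_of_lt_of_le (by omega) (Nat.le_self_pow (by omega) d)
  by_cases h2 : 2 ≤ b2
  · refine ⟨∑' d : ℕ, 1 / (d : ℝ) ^ b2, tsum_nonneg (fun d => by positivity), fun T hT u hu => ?_⟩
    rw [mul_sum]
    refine le_trans (sum_le_sum (fun d hd => ?_))
      ((aux_w_summable b2 h2).sum_le_tsum u (fun d _ => by positivity))
    have h1 : (T : ℝ) ≤ (d : ℝ) ^ b1 := by exact_mod_cast (hu d hd).le
    have h0 : 0 < d := by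
      rcases Nat.eq_zero_or_pos d with h | h
      · have := hu d hd
        rw [h, zero_pow (by omega)] at this
        omega
      · exact h
    have h0' : (0 : ℝ) < d := by exact_mod_cast h0
    rw [pow_add, mul_one_div, div_le_div_iff₀ (by positivity) (by positivity), one_mul]
    gcongr
  · have e2 : b2 = 1 := by omega
    have e1 : b1 = 1 := by omega
    subst e1 e2
    refine ⟨2, by norm_num, fun T hT u hu => ?_⟩
    have hsub : u ⊆ Ioo T (u.sup id + 1) := by
      intro d hd
      have := hu d hd
      have h3 : d ≤ u.sup id := Finset.le_sup (f := id) hd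
      rw [mem_Ioo]
      constructor
      · simpa using this
      · omega
    have h4 := sum_Ioo_inv_sq_le (α := ℝ) T (u.sup id + 1)
    have h5 : ∑ d ∈ u, 1 / (d : ℝ) ^ (1 + 1) ≤ 2 / ((T : ℝ) + 1) := by
      refine le_trans ?_ h4
      simp only [one_div, one_add_one_eq_two]
      exact sum_le_sum_of_subset_of_nonneg hsub (fun d _ _ => by positivity)
    calc _ ≤ (T : ℝ) * (2 / ((T : ℝ) + 1)) := by gcongr
      _ ≤ 2 := by
        rw [mul_div_assoc', div_le_iff₀ (by positivity)]; linarith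

lemma aux_count (b1 J : ℕ) (s : Fin J → ℤ) (d : Fin J → ℕ)
    (hd : Squarefree (∏ j, d j)) (x : ℝ) (hx : 0 ≤ x) :
    |(((Icc 1 ⌊x⌋₊).filter (fun n : ℕ => ∀ j, ((d j : ℤ)) ^ b1 ∣ (n : ℤ) - s j)).card : ℝ) -
      x / ((∏ j, d j : ℕ) : ℝ) ^ b1| ≤ 3 := by
  have hpos : ∀ j, d j ≠ 0 := fun j h =>
    hd.ne_zero (Finset.prod_eq_zero (mem_univ j) h)
  have hcop : ∀ j1 j2, j1 ≠ j2 → Nat.Coprime (d j1) (d j2) := by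
    intro j1 j2 hj
    have hdvd : d j1 * d j2 ∣ ∏ j, d j := by
      rw [← Finset.prod_pair hj]
      exact Finset.prod_dvd_prod_of_subset _ _ _ (subset_univ _)
    exact (Nat.squarefree_mul_iff.1 (hd.squarefree_of_dvd hdvd)).1
  obtain ⟨k, hk⟩ := Nat.chineseRemainderOfFinset
    (fun j => (s j % ((d j ^ b1 : ℕ) : ℤ)).toNat) (fun j => d j ^ b1) univ
    (fun j _ => pow_ne_zero _ (hpos j))
    (fun i _ j _ hij => Nat.Coprime.pow _ _ (hcop i j hij))
  have hk' : ∀ j, ((d j : ℤ)) ^ b1 ∣ (k : ℤ) - s j := by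
    intro j
    have h1 := (Int.natCast_modEq_iff.2 (hk j (mem_univ j)))
    have h0 : ((d j ^ b1 : ℕ) : ℤ) ≠ 0 := by exact_mod_cast pow_ne_zero _ (hpos j)
    rw [Int.toNat_of_nonneg (Int.emod_nonneg _ h0)] at h1
    have h2 := h1.trans (Int.mod_modEq _ _)
    have h3 := h2.symm.dvd
    push_cast at h3
    exact h3
  set q : ℕ := (∏ j, d j) ^ b1 with hq
  have hq0 : 0 < q := pow_pos (Nat.pos_of_ne_zero hd.ne_zero) _
  have hfil : (Icc 1 ⌊x⌋₊).filter (fun n : ℕ => ∀ j, ((d j : ℤ)) ^ b1 ∣ (n : ℤ) - s j) =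
      (Ioc 0 ⌊x⌋₊).filter (fun n : ℕ => n ≡ k [MOD q]) := by
    ext n
    simp only [mem_filter, mem_Icc, mem_Ioc]
    refine and_congr Iff.rfl ?_
    rw [← Int.natCast_modEq_iff, Int.modEq_comm, Int.modEq_iff_dvd]
    have e : (q : ℤ) = ∏ j, (d j : ℤ) ^ b1 := by
      rw [hq]; push_cast; rw [Finset.prod_pow]
    rw [e]
    constructor
    · intro h
      refine Fintype.prod_dvd_of_coprime ?_ ?_
      · intro i j hij
        exact IsCoprime.pow (Nat.isCoprime_iff_coprime.2 (hcop i j hij))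
      · intro j
        have := dvd_sub (h j) (hk' j)
        simpa using this
    · intro h j
      have h1 := (Finset.dvd_prod_of_mem (fun j => (d j : ℤ) ^ b1) (mem_univ j)).trans h
      have := dvd_add h1 (hk' j)
      simpa using this
  rw [hfil]
  have hc := Nat.Ioc_filter_modEq_card 0 ⌊x⌋₊ hq0 k
  set c := ((Ioc 0 ⌊x⌋₊).filter (fun n : ℕ => n ≡ k [MOD q])).card with hcdef
  have hc' : (c : ℤ) = max (⌊((⌊x⌋₊ : ℕ) - k) / (q : ℚ)⌋ - ⌊(((0 : ℕ) : ℚ) - k) / (q : ℚ)⌋) 0 := by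
    rw [← hc, hcdef]
  have hq1 : (1 : ℚ) ≤ q := by exact_mod_cast hq0
  have hle : ⌊(((0 : ℕ) : ℚ) - k) / (q : ℚ)⌋ ≤ ⌊((⌊x⌋₊ : ℕ) - k) / (q : ℚ)⌋ := by
    gcongr
    omega
  rw [max_eq_left (by omega)] at hc'
  have f1 := Int.floor_le (((⌊x⌋₊ : ℕ) - k) / (q : ℚ))
  have f2 := Int.lt_floor_add_one (((⌊x⌋₊ : ℕ) - k) / (q : ℚ))
  have f3 := Int.floor_le ((((0 : ℕ) : ℚ) - k) / (q : ℚ))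
  have f4 := Int.lt_floor_add_one ((((0 : ℕ) : ℚ) - k) / (q : ℚ))
  have hcq : (c : ℚ) = (⌊((⌊x⌋₊ : ℕ) - k) / (q : ℚ)⌋ : ℚ) - ⌊(((0 : ℕ) : ℚ) - k) / (q : ℚ)⌋ := by
    exact_mod_cast hc'
  have hb : |(c : ℚ) - (⌊x⌋₊ : ℕ) / (q : ℚ)| ≤ 1 := by
    have g1 : ((⌊x⌋₊ : ℕ) - k) / (q : ℚ) - (((0 : ℕ) : ℚ) - k) / (q : ℚ) = (⌊x⌋₊ : ℕ) / (q : ℚ) := by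
      rw [← sub_div]; push_cast; ring
    rw [hcq, ← g1, abs_le]
    constructor <;> linarith
  have hb' : |(c : ℝ) - (⌊x⌋₊ : ℕ) / (q : ℝ)| ≤ 1 := by
    have hb2 : ((|(c : ℚ) - (⌊x⌋₊ : ℕ) / (q : ℚ)| : ℚ) : ℝ) ≤ ((1 : ℚ) : ℝ) := by
      exact Rat.cast_le.2 hb
    push_cast at hb2
    exact hb2
  have hqR : (1 : ℝ) ≤ q := by exact_mod_cast hq0
  have hx2 : |(⌊x⌋₊ : ℕ) / (q : ℝ) - x / q| ≤ 1 := by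
    rw [← sub_div, abs_div, abs_of_nonneg (by linarith : (0:ℝ) ≤ q)]
    rw [div_le_one (by linarith)]
    refine le_trans ?_ hqR
    rw [abs_le]
    have := Nat.floor_le hx
    have := Nat.lt_floor_add_one x
    constructor <;> linarith
  have e : ((∏ j, d j : ℕ) : ℝ) ^ b1 = (q : ℝ) := by rw [hq]; push_cast; rfl
  rw [e]
  have := abs_sub_le (c : ℝ) ((⌊x⌋₊ : ℕ) / (q : ℝ)) (x / q)
  linarith

lemma aux_harm (J b2 T : ℕ) (hb2 : 0 < b2) (D : Finset ℕ) (hD : D ⊆ Icc 1 T) :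
    ∑ d ∈ Fintype.piFinset (fun _ : Fin J => D), ∏ j, (1 / (d j : ℝ) ^ b2) ≤
      (1 + Real.log T) ^ J := by
  have e : ∑ d ∈ Fintype.piFinset (fun _ : Fin J => D), ∏ j, (1 / (d j : ℝ) ^ b2) =
      (∑ i ∈ D, 1 / (i : ℝ) ^ b2) ^ J := by
    rw [← Finset.prod_univ_sum (fun _ => D) (fun _ (i : ℕ) => 1 / (i : ℝ) ^ b2)]; simp
  rw [e]
  gcongr
  have h := harmonic_le_one_add_log T
  rw [harmonic_eq_sum_Icc] at h
  push_cast at h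
  refine le_trans ?_ h
  refine le_trans (sum_le_sum_of_subset_of_nonneg hD (fun i _ _ => by positivity)) ?_
  refine sum_le_sum (fun i hi => ?_)
  have : (1 : ℝ) ≤ i := by exact_mod_cast (mem_Icc.1 hi).1
  rw [← one_div]
  gcongr
  exact le_self_pow₀ this (by omega)

lemma aux_tsum_diff {α : Type*} (h v : α → ℝ) (hv : Summable v) (hle : ∀ a, |h a| ≤ v a)
    (P : Finset α) : |∑' a, h a - ∑ a ∈ P, h a| ≤ ∑' a, v a - ∑ a ∈ P, v a := by
  have hs : Summable h := Summable.of_norm_bounded hv hle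
  have e1 := hs.sum_add_tsum_subtype_compl P
  have e2 := hv.sum_add_tsum_subtype_compl P
  rw [← e1, ← e2, add_sub_cancel_left, add_sub_cancel_left]
  have hv2 : Summable (fun a : {a // a ∉ P} => v a.1) :=
    hv.comp_injective Subtype.val_injective
  exact tsum_of_norm_bounded (f := fun a : {a // a ∉ P} => h a.1) hv2.hasSum
    (fun a => hle a.1)

lemma aux_multi_tail (J b1 b2 : ℕ) (hb1 : 0 < b1) (hb2 : 0 < b2) (hb : b1 ≤ b2) :
    ∃ C : ℝ, 0 ≤ C ∧ ∀ T : ℕ, 1 ≤ T →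
      (T : ℝ) * |∑' d : Fin J → ℕ,
          (ArithmeticFunction.moebius (∏ j, d j) : ℝ) / ((∏ j, d j : ℕ) : ℝ) ^ (b1 + b2) -
        ∑ d ∈ Fintype.piFinset (fun _ : Fin J => (Icc 1 T).filter (fun d => d ^ b1 ≤ T)),
          (ArithmeticFunction.moebius (∏ j, d j) : ℝ) / ((∏ j, d j : ℕ) : ℝ) ^ (b1 + b2)| ≤ C := by
  obtain ⟨C, hC, hT⟩ := aux_tail b1 b2 hb1 hb2 hb
  have hk : 2 ≤ b1 + b2 := by omega
  set w : ℕ → ℝ := fun d => 1 / (d : ℝ) ^ (b1 + b2) with hw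
  have hw0 : ∀ d, 0 ≤ w d := fun d => by positivity
  have hws : Summable w := aux_w_summable _ hk
  set W := ∑' d, w d with hW
  have hW0 : 0 ≤ W := tsum_nonneg hw0
  refine ⟨C * J * W ^ (J - 1), by positivity, fun T hT1 => ?_⟩
  specialize hT T hT1
  set D := (Icc 1 T).filter (fun d => d ^ b1 ≤ T) with hD
  set P := Fintype.piFinset (fun _ : Fin J => D) with hP
  set h : (Fin J → ℕ) → ℝ := fun d =>
    (ArithmeticFunction.moebius (∏ j, d j) : ℝ) / ((∏ j, d j : ℕ) : ℝ) ^ (b1 + b2) with hh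
  have hhs : Summable h := (aux_h_summable J (b1 + b2) hk).of_abs
  have hps := aux_pi_summable J w hw0 hws
  have e3 : ∑ d ∈ P, ∏ j, w (d j) = (∑ i ∈ D, w i) ^ J := by
    rw [hP, ← Finset.prod_univ_sum (fun _ => D) (fun _ (i : ℕ) => w i)]; simp
  have e4 : ∑' d : Fin J → ℕ, ∏ j, w (d j) ≤ W ^ J :=
    Real.tsum_le_of_sum_le (fun d => prod_nonneg (fun j _ => hw0 (d j))) (aux_pi_sum_le J w hw0 hws)
  have e5 := aux_tsum_diff h (fun d => ∏ j, w (d j)) hps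
    (fun d => aux_abs_le J (b1 + b2) d) P
  have hWD0 : 0 ≤ ∑ i ∈ D, w i := sum_nonneg (fun i _ => hw0 i)
  have hWD : ∑ i ∈ D, w i ≤ W := hws.sum_le_tsum _ (fun i _ => hw0 i)
  have e6 := abs_pow_sub_pow_le W (∑ i ∈ D, w i) J
  rw [abs_of_nonneg hW0, abs_of_nonneg hWD0, max_eq_left hWD,
    abs_of_nonneg (sub_nonneg.2 hWD)] at e6
  have e7 : |∑' d, h d - ∑ d ∈ P, h d| ≤ (W - ∑ i ∈ D, w i) * J * W ^ (J - 1) := by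
    refine le_trans e5 (le_trans ?_ (le_trans (le_abs_self _) e6))
    linarith
  calc (T : ℝ) * |∑' d, h d - ∑ d ∈ P, h d|
      ≤ T * ((W - ∑ i ∈ D, w i) * J * W ^ (J - 1)) := by gcongr
    _ = (T * (W - ∑ i ∈ D, w i)) * J * W ^ (J - 1) := by ring
    _ ≤ C * J * W ^ (J - 1) := by gcongr

theorem stmt_10 (b1 b2 J : ℕ) (hb1 : 0 < b1) (hb2 : 0 < b2) (hb : b1 ≤ b2)
    (hJ : 1 ≤ J) (hJ2 : J < 2 ^ (b1 + b2)) (s : Fin J → ℤ) :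
    ∃ C > 0, ∀ x : ℝ, 2 ≤ x →
      |(∑ n ∈ Icc 1 ⌊x⌋₊, fbs b1 b2 J s (n : ℤ)) -
          x * ∏' p : Nat.Primes, (1 - (J : ℝ) / (p : ℝ) ^ (b1 + b2))|
        ≤ C * (Real.log x) ^ J := by
  obtain ⟨C0, hC0, htail⟩ := aux_multi_tail J b1 b2 hb1 hb2 hb
  rw [← aux_euler J (b1 + b2) (by omega)]
  set S : ℕ := ∑ j, (s j).natAbs with hS
  -- exceptional set
  set E : Finset ℕ := univ.image (fun j => (s j).toNat) with hE
  set B : ℝ := ∑ n ∈ E, |fbs b1 b2 J s (n : ℤ)| with hB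
  have hB0 : 0 ≤ B := sum_nonneg (fun _ _ => abs_nonneg _)
  have hEcard : (E.card : ℝ) ≤ J := by
    have : E.card ≤ J := by simpa using (Finset.card_image_le (s := (univ : Finset (Fin J)))
      (f := fun j => (s j).toNat))
    exact_mod_cast this
  have hl2 : 0 < Real.log 2 := Real.log_pos (by norm_num)
  set A : ℝ := (1 + Real.log (1 + S)) / Real.log 2 + 1 with hA
  have hlS : 0 ≤ Real.log (1 + S) := Real.log_nonneg (by
    have : (0 : ℝ) ≤ S := by positivity
    linarith)
  have hA0 : 0 ≤ A := by positivity
  refine ⟨(B + 2 * C0) / Real.log 2 ^ J + (J + 3) * A ^ J + 1, by positivity, fun x hx => ?_⟩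
  set N := ⌊x⌋₊ with hN
  have hNx : (N : ℝ) ≤ x := Nat.floor_le (by linarith)
  have hxN : x < N + 1 := Nat.lt_floor_add_one x
  have hN2 : 2 ≤ N := Nat.le_floor (by exact_mod_cast hx)
  set T := N + S with hT
  have hT1 : 1 ≤ T := by omega
  set D := (Icc 1 T).filter (fun d => d ^ b1 ≤ T) with hD
  set P := Fintype.piFinset (fun _ : Fin J => D) with hP
  set h : ℕ → (Fin J → ℕ) → ℝ := fun k d =>
    (ArithmeticFunction.moebius (∏ j, d j) : ℝ) / ((∏ j, d j : ℕ) : ℝ) ^ k with hh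
  set L : ℝ := (1 + Real.log T) ^ J with hL
  have hharm : ∑ d ∈ P, |h b2 d| ≤ L := by
    refine le_trans (sum_le_sum (fun d _ => aux_abs_le J b2 d)) ?_
    exact aux_harm J b2 T hb2 D (filter_subset _ _)
  have hL0 : 0 ≤ L := le_trans (sum_nonneg (fun _ _ => abs_nonneg _)) hharm
  set G : ℕ → ℝ := fun n => ∑ d ∈ P,
    if (∀ j, ((d j : ℤ)) ^ b1 ∣ (n : ℤ) - s j) then h b2 d else 0 with hG
  have hGb : ∀ n, |G n| ≤ L := by
    intro n
    refine le_trans (abs_sum_le_sum_abs _ _) (le_trans (sum_le_sum (fun d _ => ?_)) hharm)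
    split_ifs
    · exact le_rfl
    · simp
  have hfG : ∀ n ∈ Icc 1 N, n ∉ E → fbs b1 b2 J s (n : ℤ) = G n := by
    intro n hn hnE
    have hne : ∀ j, (n : ℤ) - s j ≠ 0 := by
      intro j h0
      apply hnE
      rw [hE, mem_image]
      exact ⟨j, mem_univ j, by omega⟩
    unfold fbs
    simp_rw [aux_term]
    rw [tsum_eq_sum (s := P)]
    intro d hd
    by_cases h1 : ∀ j, ((d j : ℤ)) ^ b1 ∣ (n : ℤ) - s j
    · exfalso
      apply hd
      rw [hP, Fintype.mem_piFinset]
      intro j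
      have h2 := Int.natAbs_dvd_natAbs.2 (h1 j)
      rw [Int.natAbs_pow, Int.natAbs_natCast] at h2
      have h3 := Nat.le_of_dvd (Int.natAbs_pos.2 (hne j)) h2
      have h4 : (s j).natAbs ≤ S :=
        Finset.single_le_sum (f := fun j => (s j).natAbs) (fun _ _ => Nat.zero_le _) (mem_univ j)
      have h5 : n ≤ N := (mem_Icc.1 hn).2
      have h6 : d j ^ b1 ≤ T := by omega
      have h7 : d j ≤ d j ^ b1 := Nat.le_self_pow (by omega) _
      have h8 : d j ≠ 0 := by
        intro h0
        rw [h0, zero_pow (by omega)] at h2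
        have := hne j
        have := Nat.eq_zero_of_zero_dvd h2
        omega
      rw [hD, mem_filter, mem_Icc]
      exact ⟨⟨by omega, by omega⟩, h6⟩
    · rw [if_neg h1]
  -- step 1
  have s1 : |∑ n ∈ Icc 1 N, fbs b1 b2 J s (n : ℤ) - ∑ n ∈ Icc 1 N, G n| ≤ B + J * L := by
    rw [← sum_sub_distrib]
    have e : ∑ n ∈ Icc 1 N, (fbs b1 b2 J s (n : ℤ) - G n) =
        ∑ n ∈ (Icc 1 N).filter (fun n => n ∈ E), (fbs b1 b2 J s (n : ℤ) - G n) := by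
      rw [sum_filter]
      refine sum_congr rfl (fun n hn => ?_)
      split_ifs with hnE
      · rfl
      · rw [hfG n hn hnE, sub_self]
    rw [e]
    have hsub : (Icc 1 N).filter (fun n => n ∈ E) ⊆ E := fun n hn => (mem_filter.1 hn).2
    calc _ ≤ ∑ n ∈ (Icc 1 N).filter (fun n => n ∈ E), |fbs b1 b2 J s (n : ℤ) - G n| :=
          abs_sum_le_sum_abs _ _
      _ ≤ ∑ n ∈ E, |fbs b1 b2 J s (n : ℤ) - G n| :=
          sum_le_sum_of_subset_of_nonneg hsub (fun _ _ _ => abs_nonneg _)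
      _ ≤ ∑ n ∈ E, (|fbs b1 b2 J s (n : ℤ)| + L) := by
          refine sum_le_sum (fun n _ => ?_)
          refine le_trans (abs_sub _ _) ?_
          have := hGb n
          linarith
      _ = B + E.card * L := by rw [sum_add_distrib, sum_const, nsmul_eq_mul]
      _ ≤ B + J * L := by gcongr
  -- step 2
  have s2 : |∑ n ∈ Icc 1 N, G n - x * ∑ d ∈ P, h (b1 + b2) d| ≤ 3 * L := by
    have e : ∑ n ∈ Icc 1 N, G n = ∑ d ∈ P, h b2 d *
        (((Icc 1 N).filter (fun n : ℕ => ∀ j, ((d j : ℤ)) ^ b1 ∣ (n : ℤ) - s j)).card : ℝ) := by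
      simp only [hG]
      rw [sum_comm]
      refine sum_congr rfl (fun d _ => ?_)
      rw [← sum_filter, sum_const, nsmul_eq_mul, mul_comm]
    rw [e, mul_sum, ← sum_sub_distrib]
    refine le_trans (abs_sum_le_sum_abs _ _) ?_
    refine le_trans (sum_le_sum (g := fun d => 3 * |h b2 d|) (fun d _ => ?_)) ?_
    · by_cases hsq : Squarefree (∏ j, d j)
      · have hc := aux_count b1 J s d hsq x (by linarith)
        have e2 : x * h (b1 + b2) d = h b2 d * (x / ((∏ j, d j : ℕ) : ℝ) ^ b1) := by
          simp only [hh]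
          rw [pow_add, div_mul_div_comm, mul_div_assoc', mul_comm x, mul_comm (_ ^ b1)]
        rw [e2, ← mul_sub, abs_mul, mul_comm]
        gcongr
      · have hz : ∀ k, h k d = 0 := fun k => by
          simp only [hh]
          rw [ArithmeticFunction.moebius_eq_zero_of_not_squarefree hsq]; simp
        simp [hz]
    · rw [← mul_sum]
      gcongr
  -- step 3
  have s3 : |x * ∑ d ∈ P, h (b1 + b2) d - x * ∑' d, h (b1 + b2) d| ≤ 2 * C0 := by
    have ht := htail T hT1
    rw [← mul_sub, abs_mul, abs_of_nonneg (by linarith : 0 ≤ x), abs_sub_comm]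
    have hxT : x ≤ 2 * T := by
      have : (N : ℝ) + 1 ≤ 2 * T := by
        have : N + 1 ≤ 2 * T := by omega
        exact_mod_cast this
      linarith
    calc _ ≤ (2 * T) * |∑' d, h (b1 + b2) d - ∑ d ∈ P, h (b1 + b2) d| := by gcongr
      _ = 2 * (T * |∑' d, h (b1 + b2) d - ∑ d ∈ P, h (b1 + b2) d|) := by ring
      _ ≤ 2 * C0 := by gcongr
  have hlx : Real.log 2 ≤ Real.log x := Real.log_le_log (by norm_num) hx
  have hlT : 1 + Real.log T ≤ A * Real.log x := by
    have hTx : (T : ℝ) ≤ (1 + S) * x := by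
      rw [hT]; push_cast
      have : (0 : ℝ) ≤ S := by positivity
      nlinarith
    have h1 : Real.log T ≤ Real.log (1 + S) + Real.log x := by
      rw [← Real.log_mul (by positivity) (by positivity)]
      exact Real.log_le_log (by exact_mod_cast hT1) hTx
    have h2 : 1 + Real.log (1 + S) ≤ (1 + Real.log (1 + S)) / Real.log 2 * Real.log x := by
      rw [div_mul_eq_mul_div, le_div_iff₀ hl2]
      gcongr
    rw [hA, add_mul, one_mul]
    linarith
  have hLb : L ≤ A ^ J * Real.log x ^ J := by
    rw [hL, ← mul_pow]
    have : 0 ≤ Real.log T := Real.log_natCast_nonneg T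
    gcongr
  have hBb : B + 2 * C0 ≤ (B + 2 * C0) / Real.log 2 ^ J * Real.log x ^ J := by
    rw [div_mul_eq_mul_div, le_div_iff₀ (by positivity)]
    gcongr
  have hlxJ : 0 ≤ Real.log x ^ J := pow_nonneg (by linarith) J
  have t1 := abs_sub_le (∑ n ∈ Icc 1 N, fbs b1 b2 J s (n : ℤ)) (∑ n ∈ Icc 1 N, G n)
    (x * ∑' d, h (b1 + b2) d)
  have t2 := abs_sub_le (∑ n ∈ Icc 1 N, G n) (x * ∑ d ∈ P, h (b1 + b2) d)
    (x * ∑' d, h (b1 + b2) d)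
  have t3 : (J + 3) * L ≤ (J + 3) * (A ^ J * Real.log x ^ J) := by gcongr
  refine le_trans t1 ?_
  rw [add_mul, add_mul, one_mul]
  linarith
end

section
/- For complex s with Re(s) > 1 and any integers b1 ≤ b2 with b1 ≥ 1 and any integer r ≥ 1, Σ_{n≥1} f_b(n)^r / n^s = ζ(s) · Π_p (1 − p^{−b1·s} + p^{−b1·s}(1 − p^{−b2})^r), where the product over primes converges absolutely for Re(s) > 0. -/
open Finset

/-- `f_b(n) = ∑_{d^{b1} ∣ n} μ(d) / d^{b2}`. -/
def fb (b1 b2 : ℕ) (n : ℕ) : ℚ :=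
  ∑ d ∈ n.divisors.filter (fun d => d ^ b1 ∣ n),
    (ArithmeticFunction.moebius d : ℚ) / (d : ℚ) ^ b2

lemma fb_zero (b1 b2 : ℕ) : fb b1 b2 0 = 0 := by simp [fb]

lemma fb_one (b1 b2 : ℕ) : fb b1 b2 1 = 1 := by
  simp [fb, Finset.filter_singleton]

lemma fb_mul (b1 b2 : ℕ) {m n : ℕ} (h : Nat.Coprime m n) :
    fb b1 b2 (m * n) = fb b1 b2 m * fb b1 b2 n := by
  unfold fb
  rw [Finset.sum_filter, Finset.sum_filter, Finset.sum_filter, Finset.sum_mul_sum,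
    ← Finset.sum_product', Nat.divisors_mul, Finset.mul_def, Finset.sum_image h.mul_injOn_divisors]
  refine Finset.sum_congr rfl ?_
  rintro ⟨d, e⟩ hde
  simp only [Finset.mem_product, Nat.mem_divisors] at hde
  obtain ⟨⟨hd, -⟩, he, -⟩ := hde
  have hco : Nat.Coprime d e := Nat.Coprime.of_dvd hd he h
  have hiff : (d * e) ^ b1 ∣ m * n ↔ d ^ b1 ∣ m ∧ e ^ b1 ∣ n := by
    rw [mul_pow]
    constructor
    · intro hh
      have h1 : Nat.Coprime (d ^ b1) n := (Nat.Coprime.of_dvd_left hd h).pow_left _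
      have h2 : Nat.Coprime (e ^ b1) m := (Nat.Coprime.of_dvd_left he h.symm).pow_left _
      exact ⟨h1.dvd_of_dvd_mul_right ((Dvd.intro _ rfl).trans hh),
        h2.dvd_of_dvd_mul_left ((Dvd.intro_left _ rfl).trans hh)⟩
    · rintro ⟨h1, h2⟩
      exact mul_dvd_mul h1 h2
  by_cases h1 : d ^ b1 ∣ m <;> by_cases h2 : e ^ b1 ∣ n <;>
    simp only [hiff, h1, h2, and_true, and_false, if_true, if_false, mul_zero, zero_mul]
  rw [ArithmeticFunction.isMultiplicative_moebius.map_mul_of_coprime hco]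
  push_cast
  rw [mul_pow, mul_div_mul_comm]

lemma fb_prime_pow (b1 b2 : ℕ) (hb1 : 1 ≤ b1) {p : ℕ} (hp : p.Prime) (e : ℕ) :
    fb b1 b2 (p ^ e) = if b1 ≤ e then 1 - ((p : ℚ) ^ b2)⁻¹ else 1 := by
  rcases e with _ | e
  · rw [pow_zero, fb_one, if_neg (by omega)]
  · unfold fb
    rw [Finset.sum_filter, Nat.divisors_prime_pow hp, Finset.sum_map, Finset.sum_range_succ',
      Finset.sum_range_succ', Finset.sum_eq_zero]
    · have : p ^ b1 ∣ p ^ (e + 1) ↔ b1 ≤ e + 1 := Nat.pow_dvd_pow_iff_le_right hp.one_lt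
      simp only [Function.Embedding.coeFn_mk, zero_add, pow_one, pow_zero, one_pow, one_dvd, this,
        ArithmeticFunction.moebius_apply_prime hp, if_true]
      split_ifs <;> simp <;> ring
    · intro i _
      simp [ArithmeticFunction.moebius_apply_prime_pow hp]

lemma fb_bound (b1 b2 : ℕ) (hb1 : 1 ≤ b1) (n : ℕ) :
    0 ≤ fb b1 b2 n ∧ fb b1 b2 n ≤ 1 := by
  induction n using Nat.recOnPosPrimePosCoprime with
  | zero => simp [fb_zero]
  | one => simp [fb_one]
  | prime_pow p n hp hn =>
    rw [fb_prime_pow b1 b2 hb1 hp]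
    have h1 : (1 : ℚ) ≤ (p : ℚ) ^ b2 := one_le_pow₀ (by exact_mod_cast hp.one_lt.le)
    have h2 : ((p : ℚ) ^ b2)⁻¹ ≤ 1 := inv_le_one_of_one_le₀ h1
    have h3 : 0 ≤ ((p : ℚ) ^ b2)⁻¹ := by positivity
    split_ifs
    · constructor <;> linarith
    · simp
  | coprime a b _ _ hab ha hb =>
    rw [fb_mul b1 b2 hab]
    exact ⟨mul_nonneg ha.1 hb.1, mul_le_one₀ ha.2 hb.1 hb.2⟩

lemma part1 (b1 b2 r : ℕ) (hb1 : 1 ≤ b1) (hb : b1 ≤ b2) (s : ℂ) (hs : 0 < s.re) :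
    Multipliable (fun p : Nat.Primes =>
        1 - (p : ℂ) ^ (-(b1 : ℂ) * s) +
          (p : ℂ) ^ (-(b1 : ℂ) * s) * (1 - (p : ℂ) ^ (-(b2 : ℂ))) ^ r) := by
  have key : Summable (fun p : Nat.Primes => ‖(p : ℂ) ^ (-(b1 : ℂ) * s) *
      ((1 - (p : ℂ) ^ (-(b2 : ℂ))) ^ r - 1)‖) := by
    have hS := (Nat.Primes.summable_rpow (r := -s.re - 1)).mpr (by linarith)
    refine (hS.mul_left (r : ℝ)).of_nonneg_of_le (fun p => norm_nonneg _) (fun p => ?_)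
    have hp := p.2
    have hp0 : (0 : ℝ) < (p : ℕ) := by exact_mod_cast hp.pos
    have hp1 : (1 : ℝ) ≤ (p : ℕ) := by exact_mod_cast hp.one_lt.le
    rw [norm_mul, Complex.norm_natCast_cpow_of_pos hp.pos, Real.rpow_sub hp0, Real.rpow_one]
    have hre : (-(b1 : ℂ) * s).re = -(b1 * s.re) := by simp
    have hy1 : (((p : ℕ) : ℝ) ^ b2)⁻¹ ≤ (((p : ℕ) : ℝ))⁻¹ := by
      apply inv_anti₀ hp0
      exact le_self_pow₀ hp1 (by omega)
    have hy2 : (((p : ℕ) : ℝ))⁻¹ ≤ 1 := inv_le_one_of_one_le₀ hp1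
    have hy0 : 0 ≤ (((p : ℕ) : ℝ) ^ b2)⁻¹ := by positivity
    have hE : ((1 - ((p : ℕ) : ℂ) ^ (-(b2 : ℂ))) ^ r - 1) =
        (((1 - (((p : ℕ) : ℝ) ^ b2)⁻¹) ^ r - 1 : ℝ) : ℂ) := by
      rw [Complex.cpow_neg, Complex.cpow_natCast]; push_cast; rfl
    rw [hre, hE, Complex.norm_real, Real.norm_eq_abs]
    set y := (((p : ℕ) : ℝ) ^ b2)⁻¹
    have hB := one_add_mul_le_pow (a := -y) (by linarith) r
    have hU : (1 - y) ^ r ≤ 1 := pow_le_one₀ (by linarith) (by linarith)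
    have hA : |(1 - y) ^ r - 1| ≤ r * ((p : ℕ) : ℝ)⁻¹ := by
      rw [abs_of_nonpos (by linarith)]
      have h3 : (r : ℝ) * y ≤ r * ((p : ℕ) : ℝ)⁻¹ := by gcongr
      rw [← sub_eq_add_neg] at hB
      linarith
    have hX : ((p : ℕ) : ℝ) ^ (-(b1 * s.re)) ≤ ((p : ℕ) : ℝ) ^ (-s.re) := by
      apply Real.rpow_le_rpow_of_exponent_le hp1
      have : (1 : ℝ) ≤ b1 := by exact_mod_cast hb1
      nlinarith
    calc _ ≤ ((p : ℕ) : ℝ) ^ (-s.re) * (r * ((p : ℕ) : ℝ)⁻¹) := by gcongr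
      _ = _ := by rw [div_eq_mul_inv]; ring
  refine (multipliable_one_add_of_summable key).congr (fun p => ?_)
  ring

lemma local_factor (b1 : ℕ) (x c : ℂ) (hx : ‖x‖ < 1) :
    ∑' e : ℕ, (if b1 ≤ e then c else 1) * x ^ e = (1 - x)⁻¹ * (1 - x ^ b1 + x ^ b1 * c) := by
  have hg := hasSum_geometric_of_norm_lt_one hx
  have hx1 : 1 - x ≠ 0 := by
    intro h
    have : x = 1 := (sub_eq_zero.mp h).symm
    rw [this] at hx; simp at hx
  have h2 : HasSum (fun e : ℕ => (if b1 ≤ e + b1 then c else 1) * x ^ (e + b1))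
      (c * x ^ b1 * (1 - x)⁻¹) := by
    convert! hg.mul_left (c * x ^ b1) using 2 with e
    simp [pow_add]; ring
  have h3 := (hasSum_nat_add_iff (f := fun e : ℕ => (if b1 ≤ e then c else 1) * x ^ e) b1).mp h2
  rw [h3.tsum_eq]
  have h4 : ∑ i ∈ Finset.range b1, (if b1 ≤ i then c else 1) * x ^ i
      = ∑ i ∈ Finset.range b1, x ^ i := by
    refine Finset.sum_congr rfl fun i hi => ?_
    rw [if_neg (by simpa using hi), one_mul]
  have h5 := mul_neg_geom_sum x b1
  rw [h4, ← h5]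
  field_simp
  ring

theorem stmt_11 (b1 b2 r : ℕ) (hb1 : 1 ≤ b1) (hb : b1 ≤ b2) (hr : 1 ≤ r) :
    (∀ s : ℂ, 0 < s.re → Multipliable (fun p : Nat.Primes =>
        1 - (p : ℂ) ^ (-(b1 : ℂ) * s) +
          (p : ℂ) ^ (-(b1 : ℂ) * s) * (1 - (p : ℂ) ^ (-(b2 : ℂ))) ^ r)) ∧
    (∀ s : ℂ, 1 < s.re →
      ∑' n : ℕ, (fb b1 b2 n : ℂ) ^ r / (n : ℂ) ^ s =
        riemannZeta s * ∏' p : Nat.Primes,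
          (1 - (p : ℂ) ^ (-(b1 : ℂ) * s) +
            (p : ℂ) ^ (-(b1 : ℂ) * s) * (1 - (p : ℂ) ^ (-(b2 : ℂ))) ^ r)) := by
  refine ⟨fun s hs => part1 b1 b2 r hb1 hb s hs, fun s hs => ?_⟩
  have hP := (riemannZeta_eulerProduct_hasProd hs).mul
    (part1 b1 b2 r hb1 hb s (by linarith)).hasProd
  have hE := EulerProduct.eulerProduct_hasProd
    (f := fun n : ℕ => (fb b1 b2 n : ℂ) ^ r / (n : ℂ) ^ s)
    (by simp [fb_one]) ?_ ?_ (by simp [fb_zero, show r ≠ 0 by omega])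
  · refine hE.unique ?_
    convert! hP using 2 with p
    have hp := p.2
    have hp0 : ((p : ℕ) : ℂ) ≠ 0 := by exact_mod_cast hp.ne_zero
    have hx : ‖((p : ℕ) : ℂ) ^ (-s)‖ < 1 := by
      rw [Complex.norm_natCast_cpow_of_pos hp.pos]
      exact Real.rpow_lt_one_of_one_lt_of_neg (by exact_mod_cast hp.one_lt) (by simp; linarith)
    have hb1s : ((p : ℕ) : ℂ) ^ (-(b1 : ℂ) * s) = (((p : ℕ) : ℂ) ^ (-s)) ^ b1 := by
      rw [← Complex.cpow_nat_mul]; congr 1; ring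
    rw [hb1s, ← local_factor b1 _ _ hx]
    refine tsum_congr fun e => ?_
    rw [fb_prime_pow b1 b2 hb1 hp, div_eq_mul_inv, ← Complex.cpow_neg]
    congr 1
    · split_ifs
      · rw [Complex.cpow_neg, Complex.cpow_natCast]; push_cast; rfl
      · simp
    · push_cast
      rw [← Complex.natCast_cpow_natCast_mul, ← Complex.cpow_nat_mul]
  · intro m n h
    simp only [fb_mul b1 b2 h]
    push_cast
    rw [Complex.natCast_mul_natCast_cpow, mul_pow, mul_div_mul_comm]
  · have hS := Complex.summable_one_div_nat_cpow.mpr hs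
    refine hS.norm.of_nonneg_of_le (fun n => norm_nonneg _) (fun n => ?_)
    rw [norm_div, norm_div, norm_pow, norm_one]
    gcongr
    apply pow_le_one₀ (norm_nonneg _)
    have h := fb_bound b1 b2 hb1 n
    have h1 : ‖(fb b1 b2 n : ℂ)‖ = |((fb b1 b2 n : ℚ) : ℝ)| := by
      rw [← Complex.ofReal_ratCast, Complex.norm_real, Real.norm_eq_abs]
    rw [h1, abs_of_nonneg (by exact_mod_cast h.1)]
    exact_mod_cast h.2
end

section
/- Let r ≥ 1 be an integer and 1 ≤ b1 ≤ b2. For x ≥ 2 and any ε > 0, Σ_{n ≤ x} f_b(n)^r = C_{b,r}·x + O(x^{1/2+ε}), where C_{b,r} = Π_p (1 − p^{−b1} + p^{−b1}(1 − p^{−b2})^r) and the implied constant depends on ε, b, r. -/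
open Finset Real

lemma prodPow_dvd_iff (S : Finset ℕ) (hS : ∀ p ∈ S, p.Prime) (k n : ℕ) :
    (∏ p ∈ S, p) ^ k ∣ n ↔ ∀ p ∈ S, p ^ k ∣ n := by
  constructor
  · intro h p hp
    exact (pow_dvd_pow_of_dvd (Finset.dvd_prod_of_mem (fun p => p) hp) k).trans h
  · intro h
    rw [← Finset.prod_pow]
    induction S using Finset.induction_on with
    | empty => simp
    | insert a s ha ih =>
      rw [Finset.prod_insert ha]
      refine Nat.Coprime.mul_dvd_of_dvd_of_dvd ?_ (h a (by simp))
        (ih (fun p hp => hS p (by simp [hp])) (fun p hp => h p (by simp [hp])))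
      refine Nat.Coprime.prod_right fun q hq => ?_
      apply Nat.Coprime.pow
      refine (Nat.coprime_primes (hS a (by simp)) (hS q (by simp [hq]))).2 ?_
      rintro rfl
      exact ha hq

lemma squarefree_prod_of_primes (S : Finset ℕ) (hS : ∀ p ∈ S, p.Prime) :
    Squarefree (∏ p ∈ S, p) := by
  induction S using Finset.induction_on with
  | empty => simp
  | insert a s ha ih =>
    rw [Finset.prod_insert ha]
    rw [Nat.squarefree_mul]
    · exact ⟨(hS a (by simp)).squarefree, ih (fun p hp => hS p (by simp [hp]))⟩
    · refine Nat.Coprime.prod_right fun q hq => ?_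
      refine (Nat.coprime_primes (hS a (by simp)) (hS q (by simp [hq]))).2 ?_
      rintro rfl
      exact ha hq

/-- primes `p` with `p ^ b1 ∣ n`. -/
def TT (b1 n : ℕ) : Finset ℕ := n.primeFactors.filter (fun p => p ^ b1 ∣ n)

lemma TT_prime (b1 n p : ℕ) (h : p ∈ TT b1 n) : p.Prime :=
  Nat.prime_of_mem_primeFactors (Finset.mem_filter.1 h).1

lemma mem_TT (b1 n p : ℕ) (hb1 : 1 ≤ b1) (hn : n ≠ 0) (hp : p.Prime) :
    p ∈ TT b1 n ↔ p ^ b1 ∣ n := by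
  simp only [TT, Finset.mem_filter, Nat.mem_primeFactors]
  constructor
  · exact fun h => h.2
  · exact fun h => ⟨⟨hp, (dvd_pow_self p (by omega)).trans h, hn⟩, h⟩

lemma fb_eq_prod (b1 b2 n : ℕ) (hb1 : 1 ≤ b1) (hn : n ≠ 0) :
    fb b1 b2 n = ∏ p ∈ TT b1 n, (1 - 1 / (p : ℚ) ^ b2) := by
  have hR := squarefree_prod_of_primes (TT b1 n) (TT_prime b1 n)
  have hR0 : (∏ p ∈ TT b1 n, p) ≠ 0 := hR.ne_zero
  have hpf := Nat.primeFactors_prod (s := TT b1 n) (TT_prime b1 n)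
  let f : ArithmeticFunction ℚ := ⟨fun d => if d = 0 then 0 else 1 / (d : ℚ) ^ b2, by simp⟩
  have hf : f.IsMultiplicative := by
    rw [ArithmeticFunction.IsMultiplicative.iff_ne_zero]
    refine ⟨by simp [f], ?_⟩
    intro m n hm hn _
    simp [f, hm, hn, mul_pow, mul_comm]
  have key := hf.prodPrimeFactors_one_sub_of_squarefree f hR
  rw [hpf] at key
  have h1 : ∏ p ∈ TT b1 n, (1 - 1 / (p : ℚ) ^ b2) = ∏ p ∈ TT b1 n, (1 - f p) := by
    refine Finset.prod_congr rfl fun p hp => ?_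
    simp [f, (TT_prime b1 n p hp).ne_zero]
  rw [h1, key, fb]
  symm
  have hsub : (∏ p ∈ TT b1 n, p).divisors ⊆ n.divisors.filter (fun d => d ^ b1 ∣ n) := by
    intro d hd
    have hd' := Nat.dvd_of_mem_divisors hd
    have h2 : d ^ b1 ∣ n := (pow_dvd_pow_of_dvd hd' b1).trans
      ((prodPow_dvd_iff _ (TT_prime b1 n) b1 n).2 fun p hp => (Finset.mem_filter.1 hp).2)
    exact Finset.mem_filter.2 ⟨Nat.mem_divisors.2 ⟨(dvd_pow_self d (by omega)).trans h2, hn⟩, h2⟩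
  rw [← Finset.sum_subset hsub]
  · refine Finset.sum_congr rfl fun d hd => ?_
    have : d ≠ 0 := (Nat.pos_of_mem_divisors hd).ne'
    simp [f, this, div_eq_mul_inv]
  · intro d hd hd'
    have hsq : ¬ Squarefree d := by
      intro hsq
      apply hd'
      rw [Nat.mem_divisors]
      refine ⟨?_, hR0⟩
      rw [← Nat.prod_primeFactors_of_squarefree hsq]
      apply Finset.prod_dvd_prod_of_subset
      intro p hp
      have hpp := Nat.prime_of_mem_primeFactors hp
      rw [mem_TT b1 n p hb1 hn hpp]
      exact (pow_dvd_pow_of_dvd (Nat.dvd_of_mem_primeFactors hp) b1).trans (Finset.mem_filter.1 hd).2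
    simp [ArithmeticFunction.moebius_eq_zero_of_not_squarefree hsq]

/-- primes `p` with `p ^ b1 ∣ n`, as a set of `Nat.Primes`. -/
def TP (b1 n : ℕ) : Finset Nat.Primes := (TT b1 n).subtype Nat.Prime

lemma mem_TP (b1 n : ℕ) (q : Nat.Primes) : q ∈ TP b1 n ↔ (q : ℕ) ∈ TT b1 n :=
  Finset.mem_subtype

lemma prod_TP (b1 n : ℕ) (f : ℕ → ℝ) : ∏ p ∈ TP b1 n, f p = ∏ p ∈ TT b1 n, f p :=
  Finset.prod_subtype_of_mem f (TT_prime b1 n)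

/-- the product of a set of primes. -/
def DD (S : Finset Nat.Primes) : ℕ := ∏ p ∈ S, (p : ℕ)

lemma DD_pos (S : Finset Nat.Primes) : 0 < DD S := Finset.prod_pos fun p _ => p.2.pos

lemma DD_dvd (b1 n : ℕ) (hb1 : 1 ≤ b1) (hn : n ≠ 0) (S : Finset Nat.Primes) :
    DD S ^ b1 ∣ n ↔ S ⊆ TP b1 n := by
  have h : DD S = ∏ p ∈ S.map ⟨fun q : Nat.Primes => (q : ℕ), Subtype.val_injective⟩, p := by
    rw [Finset.prod_map]; rfl
  rw [h, prodPow_dvd_iff _ (by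
    intro p hp
    obtain ⟨q, _, rfl⟩ := Finset.mem_map.1 hp
    exact q.2)]
  constructor
  · intro h q hq
    rw [mem_TP]
    exact (mem_TT b1 n q hb1 hn q.2).2 (h q (Finset.mem_map.2 ⟨q, hq, rfl⟩))
  · intro h p hp
    obtain ⟨q, hq, rfl⟩ := Finset.mem_map.1 hp
    exact (mem_TT b1 n q hb1 hn q.2).1 ((mem_TP b1 n q).1 (h hq))

/-- local coefficient -/
noncomputable def aa (b2 r : ℕ) (p : Nat.Primes) : ℝ := (1 - 1 / ((p : ℕ) : ℝ) ^ b2) ^ r - 1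

lemma fb_pow_hasSum (b1 b2 r n : ℕ) (hb1 : 1 ≤ b1) (hn : n ≠ 0) :
    HasSum (fun S : Finset Nat.Primes => if DD S ^ b1 ∣ n then ∏ p ∈ S, aa b2 r p else 0)
      ((fb b1 b2 n : ℝ) ^ r) := by
  have h1 : (fb b1 b2 n : ℝ) ^ r = ∑ S ∈ (TP b1 n).powerset,
      (if DD S ^ b1 ∣ n then ∏ p ∈ S, aa b2 r p else 0) := by
    have h2 : ∑ S ∈ (TP b1 n).powerset,
      (if DD S ^ b1 ∣ n then ∏ p ∈ S, aa b2 r p else 0) =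
      ∑ S ∈ (TP b1 n).powerset, ∏ p ∈ S, aa b2 r p := by
      refine Finset.sum_congr rfl fun S hS => ?_
      rw [if_pos ((DD_dvd b1 n hb1 hn S).2 (Finset.mem_powerset.1 hS))]
    rw [h2, ← Finset.prod_one_add, fb_eq_prod b1 b2 n hb1 hn]
    push_cast
    rw [← Finset.prod_pow, ← prod_TP b1 n (fun p : ℕ => (1 - 1 / (p : ℝ) ^ b2) ^ r)]
    refine Finset.prod_congr rfl fun p _ => ?_
    simp only [aa]; ring
  rw [h1]
  apply hasSum_sum_of_ne_finset_zero
  intro S hS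
  rw [if_neg]
  rw [DD_dvd b1 n hb1 hn]
  simpa using hS

lemma abs_aa_le (b1 b2 r : ℕ) (hb1 : 1 ≤ b1) (hb : b1 ≤ b2) (p : Nat.Primes) :
    |aa b2 r p| ≤ r / ((p : ℕ) : ℝ) := by
  have hp1 : (1 : ℝ) ≤ ((p : ℕ) : ℝ) := by exact_mod_cast p.2.one_lt.le
  have h0 : (0 : ℝ) < ((p : ℕ) : ℝ) := by linarith
  have hpow : ((p : ℕ) : ℝ) ≤ ((p : ℕ) : ℝ) ^ b2 := le_self_pow₀ hp1 (by omega)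
  have ht : 1 / ((p : ℕ) : ℝ) ^ b2 ≤ 1 / ((p : ℕ) : ℝ) := one_div_le_one_div_of_le h0 hpow
  have ht1 : 1 / ((p : ℕ) : ℝ) ≤ 1 := by rw [div_le_one h0]; exact hp1
  have ht0 : 0 ≤ 1 / ((p : ℕ) : ℝ) ^ b2 := by positivity
  unfold aa
  set t := 1 / ((p : ℕ) : ℝ) ^ b2
  have hB := one_add_mul_le_pow (a := -t) (by linarith) r
  have hu : (1 - t) ^ r ≤ 1 := pow_le_one₀ (by linarith) (by linarith)
  have hrt : (r : ℝ) * t ≤ r * (1 / ((p : ℕ) : ℝ)) :=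
    mul_le_mul_of_nonneg_left ht (Nat.cast_nonneg r)
  rw [← sub_eq_add_neg] at hB
  rw [abs_of_nonpos (by linarith), div_eq_mul_one_div]
  linarith

/-- local majorant -/
noncomputable def cc (b1 b2 r : ℕ) (p : Nat.Primes) : ℝ :=
  |aa b2 r p| / √(((p : ℕ) : ℝ) ^ b1)

lemma cc_summable (b1 b2 r : ℕ) (hb1 : 1 ≤ b1) (hb : b1 ≤ b2) : Summable (cc b1 b2 r) := by
  have h := (Nat.Primes.summable_rpow.mpr (by norm_num : -(3 / 2 : ℝ) < -1)).mul_left (r : ℝ)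
  refine h.of_nonneg_of_le (fun p => by unfold cc; positivity) fun p => ?_
  have hp1 : (1 : ℝ) ≤ ((p : ℕ) : ℝ) := by exact_mod_cast p.2.one_lt.le
  have h0 : (0 : ℝ) < ((p : ℕ) : ℝ) := by linarith
  have hs : √((p : ℕ) : ℝ) ≤ √(((p : ℕ) : ℝ) ^ b1) :=
    Real.sqrt_le_sqrt (le_self_pow₀ hp1 (by omega))
  have hs0 : 0 < √((p : ℕ) : ℝ) := Real.sqrt_pos.2 h0
  calc cc b1 b2 r p ≤ (r / ((p : ℕ) : ℝ)) / √((p : ℕ) : ℝ) := by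
        unfold cc
        exact div_le_div₀ (by positivity) (abs_aa_le b1 b2 r hb1 hb p) hs0 hs
    _ = r * ((p : ℕ) : ℝ) ^ (-(3 / 2 : ℝ)) := by
        rw [Real.rpow_neg h0.le, show (3 / 2 : ℝ) = 1 + 1 / 2 by norm_num,
          Real.rpow_add h0, Real.rpow_one, ← Real.sqrt_eq_rpow]
        field_simp

lemma floor_bound (y : ℝ) (hy : 0 ≤ y) : |(⌊y⌋₊ : ℝ) - y| ≤ √y := by
  have h1 := Nat.floor_le hy
  have h2 := Nat.lt_floor_add_one y
  rw [abs_of_nonpos (by linarith)]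
  rcases lt_or_ge y 1 with h | h
  · rw [Nat.floor_eq_zero.2 h]
    apply Real.le_sqrt_of_sq_le
    simp
    nlinarith
  · have : 1 ≤ √y := Real.one_le_sqrt.2 h
    linarith

theorem stmt_12 (b1 b2 r : ℕ) (hb1 : 1 ≤ b1) (hb : b1 ≤ b2) (hr : 1 ≤ r) :
    ∀ ε : ℝ, 0 < ε → ∃ C > 0, ∀ x : ℝ, 2 ≤ x →
      |(∑ n ∈ Icc 1 ⌊x⌋₊, (fb b1 b2 n : ℝ) ^ r) -
          (∏' p : Nat.Primes,
            (1 - 1 / (p : ℝ) ^ b1 + 1 / (p : ℝ) ^ b1 * (1 - 1 / (p : ℝ) ^ b2) ^ r)) * x|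
        ≤ C * x ^ ((1 : ℝ) / 2 + ε) := by
  intro ε hε
  have hcs := cc_summable b1 b2 r hb1 hb
  have hcc0 : ∀ p, 0 ≤ cc b1 b2 r p := fun p => by unfold cc; positivity
  have hsumc : Summable (fun S : Finset Nat.Primes => ∏ p ∈ S, cc b1 b2 r p) :=
    summable_finsetProd_of_summable_nonneg hcc0 hcs
  have hK0 : 0 ≤ ∑' S : Finset Nat.Primes, ∏ p ∈ S, cc b1 b2 r p :=
    tsum_nonneg fun S => Finset.prod_nonneg fun p _ => hcc0 p
  set K := ∑' S : Finset Nat.Primes, ∏ p ∈ S, cc b1 b2 r p with hK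
  have hps : Summable (fun S : Finset Nat.Primes =>
      ∏ p ∈ S, (aa b2 r p / ((p : ℕ) : ℝ) ^ b1)) := by
    apply summable_finsetProd_of_summable_norm
    refine hcs.of_nonneg_of_le (fun p => norm_nonneg _) fun p => ?_
    have hp1 : (1 : ℝ) ≤ ((p : ℕ) : ℝ) ^ b1 := one_le_pow₀ (by exact_mod_cast p.2.one_lt.le)
    rw [norm_div, Real.norm_eq_abs, Real.norm_eq_abs, abs_of_pos (by linarith : 0 < ((p : ℕ) : ℝ) ^ b1)]
    unfold cc
    refine div_le_div_of_nonneg_left (abs_nonneg _) (Real.sqrt_pos.2 (by linarith)) ?_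
    exact Real.sqrt_le_self_iff.2 (Or.inr hp1)
  have hprod : (∏' p : Nat.Primes,
      (1 - 1 / (p : ℝ) ^ b1 + 1 / (p : ℝ) ^ b1 * (1 - 1 / (p : ℝ) ^ b2) ^ r)) =
      ∑' S : Finset Nat.Primes, ∏ p ∈ S, (aa b2 r p / ((p : ℕ) : ℝ) ^ b1) := by
    rw [← tprod_one_add hps]
    refine tprod_congr fun p => ?_
    simp only [aa]; ring
  rw [hprod]
  refine ⟨K + 1, by linarith, fun x hx => ?_⟩
  have hx0 : 0 ≤ x := by linarith
  have hA : HasSum (fun S : Finset Nat.Primes =>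
      (∏ p ∈ S, aa b2 r p) * (⌊x / ((DD S ^ b1 : ℕ) : ℝ)⌋₊ : ℝ))
      (∑ n ∈ Icc 1 ⌊x⌋₊, (fb b1 b2 n : ℝ) ^ r) := by
    have := hasSum_sum (s := Icc 1 ⌊x⌋₊) (fun n hn => fb_pow_hasSum b1 b2 r n hb1
      (by have := (Finset.mem_Icc.1 hn).1; omega))
    convert this using 2 with S
    rw [← Finset.sum_filter, Finset.sum_const, nsmul_eq_mul, mul_comm]
    congr 2
    rw [Nat.floor_div_natCast, ← Nat.Ioc_filter_dvd_card_eq_div]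
    rfl
  have hB := hps.hasSum.mul_right x
  have hd := hA.sub hB
  rw [← hd.tsum_eq]
  have hbound : ∀ S : Finset Nat.Primes, ‖(∏ p ∈ S, aa b2 r p) * (⌊x / ((DD S ^ b1 : ℕ) : ℝ)⌋₊ : ℝ)
      - (∏ p ∈ S, (aa b2 r p / ((p : ℕ) : ℝ) ^ b1)) * x‖ ≤ (∏ p ∈ S, cc b1 b2 r p) * √x := by
    intro S
    have e0 : ((DD S ^ b1 : ℕ) : ℝ) = ∏ p ∈ S, ((p : ℕ) : ℝ) ^ b1 := by
      simp [DD, Finset.prod_pow]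
    have e1 : (∏ p ∈ S, (aa b2 r p / ((p : ℕ) : ℝ) ^ b1)) * x =
        (∏ p ∈ S, aa b2 r p) * (x / ((DD S ^ b1 : ℕ) : ℝ)) := by
      rw [Finset.prod_div_distrib, e0]; ring
    have e2 : √((DD S ^ b1 : ℕ) : ℝ) = ∏ p ∈ S, √(((p : ℕ) : ℝ) ^ b1) := by
      rw [e0]
      exact Real.sqrt_prod _ (fun p _ => by positivity)
    have e3 : (∏ p ∈ S, cc b1 b2 r p) * √x =
        |∏ p ∈ S, aa b2 r p| * √(x / ((DD S ^ b1 : ℕ) : ℝ)) := by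
      unfold cc
      rw [Finset.prod_div_distrib, Real.sqrt_div hx0, e2, Finset.abs_prod]; ring
    rw [e1, e3, ← mul_sub, norm_mul, Real.norm_eq_abs, Real.norm_eq_abs]
    exact mul_le_mul_of_nonneg_left (floor_bound _ (by positivity)) (abs_nonneg _)
  have hfin := tsum_of_norm_bounded (hsumc.hasSum.mul_right (√x)) hbound
  rw [Real.norm_eq_abs] at hfin
  refine hfin.trans ?_
  have hle : √x ≤ x ^ ((1 : ℝ) / 2 + ε) := by
    rw [Real.sqrt_eq_rpow]
    exact Real.rpow_le_rpow_of_exponent_le (by linarith) (by linarith)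
  have hs0 := Real.sqrt_nonneg x
  rw [← hK]
  calc K * √x ≤ (K + 1) * √x := by nlinarith
    _ ≤ _ := mul_le_mul_of_nonneg_left hle (by linarith)
end

section
/- Let J ≥ 1, 0 < α < 1, m, n ∈ ℕ, and let s = (s_1,...,s_J), t = (t_1,...,t_J) be integer vectors with gcd_b(s_{j1} − s_{j2}, t_{j1} − t_{j2}) = 1 for all j1 ≠ j2. Suppose n > max_j |s_j|. Then for any ε > 0, Σ_{0 ≤ k ≤ m, gcd_b(n−s_j, k−t_j)=1 ∀j} C(m,k) α^k (1−α)^{m−k} = f_{b,s}(n) + O(n^ε · m^{−1/2}), where f_{b,s}(n) = Σ μ(d_1)···μ(d_J)/(d_1···d_J)^{b2} over pairwise-coprime tuples (d_1,...,d_J) with d_j^{b1} | n − s_j for all j, and the implied constant depends on α, J, ε. -/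
open Finset Real
open scoped Classical

/-- Generalized gcd: the largest positive integer `d` with `d^b1 ∣ m` and `d^b2 ∣ n`. -/
noncomputable def gcdb (b1 b2 : ℕ) (m n : ℤ) : ℕ :=
  sSup {d : ℕ | 0 < d ∧ (d : ℤ) ^ b1 ∣ m ∧ (d : ℤ) ^ b2 ∣ n}

/-- Binomial weights. -/
noncomputable def binW (α : ℝ) (m k : ℕ) : ℝ := (m.choose k : ℝ) * α ^ k * (1 - α) ^ (m - k)

lemma binW_nonneg {α : ℝ} (h0 : 0 < α) (h1 : α < 1) (m k : ℕ) : 0 ≤ binW α m k := by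
  unfold binW
  have : 0 ≤ 1 - α := by linarith
  positivity

lemma binW_zero {α : ℝ} {m k : ℕ} (h : m < k) : binW α m k = 0 := by
  unfold binW
  rw [Nat.choose_eq_zero_of_lt h]; simp

lemma binW_sum (α : ℝ) (m : ℕ) : ∑ k ∈ range (m + 1), binW α m k = 1 := by
  have h := congrArg (Polynomial.eval α) (bernsteinPolynomial.sum ℝ m)
  rw [Polynomial.eval_finsetSum] at h
  simpa [bernsteinPolynomial, binW] using h

lemma binW_var (α : ℝ) (m : ℕ) :
    ∑ k ∈ range (m + 1), (m * α - k) ^ 2 * binW α m k = m * α * (1 - α) := by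
  have h := congrArg (Polynomial.eval α) (bernsteinPolynomial.variance ℝ m)
  rw [Polynomial.eval_finsetSum] at h
  simpa [bernsteinPolynomial, binW] using h

lemma binW_diff {α : ℝ} (h0 : 0 < α) (h1 : α < 1) (m k : ℕ) :
    binW α m (k + 1) - binW α m k =
      binW α (m + 1) (k + 1) * (((m + 1 : ℕ) : ℝ) * α - ((k + 1 : ℕ) : ℝ)) / (α * (1 - α) * (m + 1)) := by
  have hb : 0 < 1 - α := by linarith
  rcases lt_or_ge m k with hk | hk
  · rw [binW_zero hk, binW_zero (by omega), binW_zero (by omega)]; simp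
  · obtain ⟨l, rfl⟩ := Nat.exists_eq_add_of_le hk
    rw [eq_div_iff (by positivity)]
    have e1 : (((k + l + 1).choose (k + 1) : ℕ) : ℝ) * (k + 1) = (k + l + 1) * ((k + l).choose k : ℕ) := by
      have := Nat.add_one_mul_choose_eq (k + l) k
      exact_mod_cast this.symm
    have e2 : (((k + l + 1).choose (k + 1) : ℕ) : ℝ) = (k + l).choose k + (k + l).choose (k + 1) := by
      have := Nat.choose_succ_succ (k + l) k
      exact_mod_cast this
    unfold binW
    have s1 : k + l - k = l := by omega
    have s2 : k + l + 1 - (k + 1) = l := by omega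
    rw [s1, s2]
    rcases l with _ | l
    · simp only [add_zero] at *
      simp
      ring
    · have s3 : k + (l + 1) - (k + 1) = l := by omega
      rw [s3]
      push_cast at *
      set P : ℝ := (((k + (l + 1) + 1).choose (k + 1) : ℕ) : ℝ)
      set Q : ℝ := (((k + (l + 1)).choose k : ℕ) : ℝ)
      set R : ℝ := (((k + (l + 1)).choose (k + 1) : ℕ) : ℝ)
      have e3 : (k + (l + 1) + 1) * R = P * (l + 1) := by
        have : R = P - Q := by linarith
        rw [this]; linarith
      calc _ = α ^ (k + 1) * (1 - α) ^ (l + 1) * (α * ((k + (l + 1) + 1) * R)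
            - (1 - α) * ((k + (l + 1) + 1) * Q)) := by ring
        _ = _ := by rw [e3, ← e1]; ring

lemma binW_absmean {α : ℝ} (h0 : 0 < α) (h1 : α < 1) (M : ℕ) (hM : 1 ≤ M) :
    ∑ k ∈ range (M + 1), binW α M k * |(M : ℝ) * α - k| ≤ √M := by
  have hM' : (0 : ℝ) < M := by exact_mod_cast hM
  have hL : 0 < √(M : ℝ) := Real.sqrt_pos.2 hM'
  have hLL : √(M : ℝ) * √M = M := Real.mul_self_sqrt hM'.le
  have key : ∀ x : ℝ, |x| ≤ (x ^ 2 / √M + √M) / 2 := by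
    intro x
    rw [le_div_iff₀ (by norm_num), ← sub_nonneg]
    have : x ^ 2 / √M + √M - |x| * 2 = (|x| - √M) ^ 2 / √M := by
      field_simp
      rw [← sq_abs x]; ring
    rw [this]; positivity
  calc _ ≤ ∑ k ∈ range (M + 1), (1 / (2 * √M) * (((M : ℝ) * α - k) ^ 2 * binW α M k)
          + √M / 2 * binW α M k) := by
        apply Finset.sum_le_sum
        intro k _
        have := mul_le_mul_of_nonneg_left (key ((M : ℝ) * α - k)) (binW_nonneg h0 h1 M k)
        refine this.trans (le_of_eq ?_)
        field_simp
    _ = 1 / (2 * √M) * (M * α * (1 - α)) + √M / 2 := by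
        rw [Finset.sum_add_distrib, ← Finset.mul_sum, ← Finset.mul_sum, binW_sum, binW_var]; ring
    _ ≤ √M := by
        have h2 : α * (1 - α) ≤ 1 := by nlinarith
        have : 1 / (2 * √(M : ℝ)) * (M * α * (1 - α)) = √M / 2 * (α * (1 - α)) := by
          nth_rewrite 2 [← hLL]
          field_simp
        rw [this]
        nlinarith

lemma binW_TV {α : ℝ} (h0 : 0 < α) (h1 : α < 1) (m : ℕ) (hm : 1 ≤ m) (N : ℕ) :
    ∑ k ∈ range N, |binW α m (k + 1) - binW α m k| ≤ 1 / (α * (1 - α)) * (m : ℝ) ^ (-(1 : ℝ) / 2) := by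
  have hb : 0 < 1 - α := by linarith
  have hm0 : (0 : ℝ) < m := by exact_mod_cast hm
  have hsub : ∑ k ∈ range N, |binW α m (k + 1) - binW α m k|
      ≤ ∑ k ∈ range (m + 1), |binW α m (k + 1) - binW α m k| := by
    rcases le_total N (m + 1) with h | h
    · exact Finset.sum_le_sum_of_subset_of_nonneg (by simpa using h) (fun _ _ _ => abs_nonneg _)
    · apply le_of_eq
      symm
      apply Finset.sum_subset (by simpa using h)
      intro k _ hk
      simp only [Finset.mem_range] at hk
      rw [binW_zero (by omega), binW_zero (by omega)]; simp
  refine hsub.trans ?_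
  have h2 : ∑ k ∈ range (m + 1), |binW α m (k + 1) - binW α m k| ≤
      (∑ k ∈ range (m + 1 + 1), binW α (m + 1) k * |((m + 1 : ℕ) : ℝ) * α - k|) / (α * (1 - α) * (m + 1)) := by
    rw [Finset.sum_range_succ' _ (m + 1), add_div, Finset.sum_div]
    have : 0 ≤ binW α (m + 1) 0 * |((m + 1 : ℕ) : ℝ) * α - (0 : ℕ)| / (α * (1 - α) * (m + 1)) := by
      have := binW_nonneg h0 h1 (m + 1) 0
      positivity
    refine le_add_of_le_of_nonneg (le_of_eq ?_) this
    apply Finset.sum_congr rfl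
    intro k _
    rw [binW_diff h0 h1, abs_div, abs_mul, abs_of_nonneg (binW_nonneg h0 h1 _ _),
      abs_of_pos (show 0 < α * (1 - α) * (m + 1) by positivity)]
  refine h2.trans ?_
  have h3 := binW_absmean h0 h1 (m + 1) (by omega)
  have hp : (0 : ℝ) < ((m + 1 : ℕ) : ℝ) := by positivity
  calc _ ≤ √((m + 1 : ℕ) : ℝ) / (α * (1 - α) * (m + 1)) := by gcongr
    _ = 1 / (α * (1 - α)) * (1 / √((m + 1 : ℕ) : ℝ)) := by
      have : (m : ℝ) + 1 = √((m + 1 : ℕ) : ℝ) * √((m + 1 : ℕ) : ℝ) := by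
        rw [Real.mul_self_sqrt hp.le]; push_cast; ring
      rw [this]
      have := Real.sqrt_pos.2 hp
      field_simp
    _ ≤ _ := by
      have : (m : ℝ) ^ (-(1 : ℝ) / 2) = 1 / √m := by
        rw [neg_div, Real.rpow_neg hm0.le, ← Real.sqrt_eq_rpow, one_div]
      rw [this]
      have := Real.sqrt_pos.2 hm0
      gcongr
      simp

lemma tv_block (B : ℕ → ℝ) (D r : ℕ) (hr : r < D) (q : ℕ) :
    |(D : ℝ) * (∑ k ∈ range (q * D), if k % D = r then B k else 0) - ∑ k ∈ range (q * D), B k|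
      ≤ D * ∑ k ∈ range (q * D), |B (k + 1) - B k| := by
  have pt : ∀ (a c x y : ℕ), x ≤ y → y < c →
      |B (a + y) - B (a + x)| ≤ ∑ k ∈ range c, |B (a + k + 1) - B (a + k)| := by
    intro a c x y hxy hy
    have h1 : B (a + y) - B (a + x) = ∑ k ∈ Finset.Ico x y, (B (a + k + 1) - B (a + k)) := by
      have := Finset.sum_Ico_sub (fun k => B (a + k)) hxy
      exact this.symm
    rw [h1]
    refine (Finset.abs_sum_le_sum_abs _ _).trans ?_
    apply Finset.sum_le_sum_of_subset_of_nonneg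
    · intro k; simp; omega
    · intros; exact abs_nonneg _
  have pt2 : ∀ (a c x y : ℕ), x < c → y < c →
      |B (a + y) - B (a + x)| ≤ ∑ k ∈ range c, |B (a + k + 1) - B (a + k)| := by
    intro a c x y hx hy
    rcases le_total x y with h | h
    · exact pt a c x y h hy
    · rw [abs_sub_comm]; exact pt a c y x h hx
  induction q with
  | zero => simp
  | succ q ih =>
    rw [Nat.succ_mul, Finset.sum_range_add, Finset.sum_range_add, Finset.sum_range_add]
    have e1 : (∑ x ∈ range D, if (q * D + x) % D = r then B (q * D + x) else 0) = B (q * D + r) := by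
      rw [Finset.sum_eq_single r]
      · simp [Nat.mod_eq_of_lt hr]
      · intro x hx hxr
        simp only [Finset.mem_range] at hx
        have : (q * D + x) % D = x := by simp [Nat.mod_eq_of_lt hx]
        rw [this, if_neg hxr]
      · simp [hr]
    rw [e1]
    have e2 : |(D : ℝ) * B (q * D + r) - ∑ x ∈ range D, B (q * D + x)| ≤
        D * ∑ k ∈ range D, |B (q * D + k + 1) - B (q * D + k)| := by
      have : (D : ℝ) * B (q * D + r) - ∑ x ∈ range D, B (q * D + x)
          = ∑ x ∈ range D, (B (q * D + r) - B (q * D + x)) := by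
        rw [Finset.sum_sub_distrib]; simp
      rw [this]
      refine (Finset.abs_sum_le_sum_abs _ _).trans ?_
      refine (Finset.sum_le_card_nsmul _ _ (∑ k ∈ range D, |B (q * D + k + 1) - B (q * D + k)|) ?_).trans ?_
      · intro x hx
        exact pt2 _ _ _ _ (by simpa using hx) hr
      · simp
    rw [abs_le] at *
    constructor <;> nlinarith [ih.1, ih.2, e2.1, e2.2]

lemma binW_AP {α : ℝ} (h0 : 0 < α) (h1 : α < 1) (m : ℕ) (hm : 1 ≤ m) (D r : ℕ) (hr : r < D) :
    |(∑ k ∈ range (m + 1), if k % D = r then binW α m k else 0) - 1 / (D : ℝ)|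
      ≤ 1 / (α * (1 - α)) * (m : ℝ) ^ (-(1 : ℝ) / 2) := by
  have hD : (0 : ℝ) < D := by exact_mod_cast (by omega : 0 < D)
  have hle : m + 1 ≤ (m + 1) * D := Nat.le_mul_of_pos_right _ (by omega)
  have h := tv_block (binW α m) D r hr (m + 1)
  have e1 : (∑ k ∈ range ((m + 1) * D), if k % D = r then binW α m k else 0)
      = ∑ k ∈ range (m + 1), if k % D = r then binW α m k else 0 := by
    symm
    apply Finset.sum_subset (by simpa using hle)
    intro k _ hk
    simp only [Finset.mem_range] at hk
    rw [binW_zero (by omega)]; simp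
  have e2 : (∑ k ∈ range ((m + 1) * D), binW α m k) = 1 := by
    rw [← binW_sum α m]
    symm
    apply Finset.sum_subset (by simpa using hle)
    intro k _ hk
    simp only [Finset.mem_range] at hk
    rw [binW_zero (by omega)]
  rw [e1, e2] at h
  have h2 := h.trans (mul_le_mul_of_nonneg_left (binW_TV h0 h1 m hm ((m + 1) * D)) hD.le)
  set S := ∑ k ∈ range (m + 1), if k % D = r then binW α m k else 0
  have : (D : ℝ) * S - 1 = D * (S - 1 / D) := by field_simp
  rw [this, abs_mul, abs_of_pos hD] at h2
  exact le_of_mul_le_mul_left h2 hD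

lemma divisor_bound (δ : ℝ) (hδ : 0 < δ) :
    ∃ C > 0, ∀ N : ℕ, 0 < N → (N.divisors.card : ℝ) ≤ C * (N : ℝ) ^ δ := by
  have hl2 : 0 < Real.log 2 := Real.log_pos (by norm_num)
  set K : ℝ := 1 + 1 / (δ * Real.log 2) with hK
  have hK1 : 1 ≤ K := by
    have : 0 < 1 / (δ * Real.log 2) := by positivity
    linarith
  obtain ⟨P, hP⟩ := exists_nat_ge ((2 : ℝ) ^ (1 / δ))
  refine ⟨K ^ P, by positivity, ?_⟩
  intro N hN
  have loc : ∀ p : ℕ, 2 ≤ p → ∀ a : ℕ, ((a : ℝ) + 1) ≤ (if p < P then K else 1) * ((p : ℝ) ^ a) ^ δ := by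
    intro p hp a
    have hp' : (2 : ℝ) ≤ p := by exact_mod_cast hp
    split_ifs with h
    · have h1 : ((2 : ℝ) ^ a) ^ δ ≤ ((p : ℝ) ^ a) ^ δ := by gcongr
      have h2 : 1 + a * (δ * Real.log 2) ≤ ((2 : ℝ) ^ a) ^ δ := by
        rw [Real.rpow_def_of_pos (by positivity), Real.log_pow]
        have := Real.add_one_le_exp ((a : ℝ) * Real.log 2 * δ)
        linarith
      have h3 : (a : ℝ) + 1 ≤ K * (1 + a * (δ * Real.log 2)) := by
        have hx : 0 < δ * Real.log 2 := by positivity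
        have : K * (1 + a * (δ * Real.log 2)) = 1 + a + 1 / (δ * Real.log 2) + a * (δ * Real.log 2) := by
          rw [hK]; field_simp; ring
        rw [this]
        have : 0 < 1 / (δ * Real.log 2) := by positivity
        have : 0 ≤ a * (δ * Real.log 2) := by positivity
        linarith
      refine h3.trans ?_
      gcongr
      exact h2.trans h1
    · have hpP : (P : ℝ) ≤ p := by exact_mod_cast (not_lt.1 h)
      have h1 : (2 : ℝ) ≤ (p : ℝ) ^ δ := by
        calc (2 : ℝ) = ((2 : ℝ) ^ (1 / δ)) ^ δ := by
              rw [← Real.rpow_mul (by norm_num), one_div_mul_cancel hδ.ne', Real.rpow_one]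
          _ ≤ (p : ℝ) ^ δ := by gcongr; exact hP.trans hpP
      have h2 : ((p : ℝ) ^ a) ^ δ = ((p : ℝ) ^ δ) ^ a := by
        rw [← Real.rpow_natCast, ← Real.rpow_natCast, ← Real.rpow_mul (by positivity),
          ← Real.rpow_mul (by positivity), mul_comm]
      rw [h2, one_mul]
      have h3 : (a : ℝ) + 1 ≤ 2 ^ a := by
        have := Nat.lt_two_pow_self (n := a)
        exact_mod_cast this
      exact h3.trans (by gcongr)
  have hNprod : (N : ℝ) ^ δ = ∏ p ∈ N.primeFactors, ((p : ℝ) ^ (N.factorization p)) ^ δ := by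
    rw [Real.finsetProd_rpow _ _ (fun i _ => by positivity)]
    congr 1
    conv_lhs => rw [← Nat.prod_factorization_pow_eq_self hN.ne']
    rw [Nat.prod_factorization_eq_prod_primeFactors]
    push_cast
    rfl
  rw [Nat.card_divisors hN.ne', hNprod]
  push_cast
  calc _ ≤ ∏ p ∈ N.primeFactors, ((if p < P then K else 1) * ((p : ℝ) ^ (N.factorization p)) ^ δ) := by
        apply Finset.prod_le_prod
        · intros; positivity
        · intro p hp
          exact loc p (Nat.prime_of_mem_primeFactors hp).two_le _
    _ = (∏ p ∈ N.primeFactors, (if p < P then K else 1)) * ∏ p ∈ N.primeFactors, ((p : ℝ) ^ (N.factorization p)) ^ δ :=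
        Finset.prod_mul_distrib
    _ ≤ _ := by
        gcongr
        rw [← Finset.prod_filter, Finset.prod_const]
        apply pow_le_pow_right₀ hK1
        calc _ ≤ (range P).card := by
              apply Finset.card_le_card
              intro p; simp
          _ = P := by simp

lemma natdvd (d b : ℕ) (c : ℤ) : (d : ℤ) ^ b ∣ c ↔ d ^ b ∣ c.natAbs := by
  rw [← Int.natCast_dvd]; push_cast; rfl

lemma gcdb_indicator (b1 b2 : ℕ) (hb1 : 0 < b1) (a c : ℤ) (ha : 0 < a) :
    (if gcdb b1 b2 a c = 1 then (1 : ℝ) else 0) =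
      ∑ d ∈ a.toNat.divisors.filter (fun d : ℕ => (d : ℤ) ^ b1 ∣ a),
        if (d : ℤ) ^ b2 ∣ c then (ArithmeticFunction.moebius d : ℝ) else 0 := by
  set S : Set ℕ := {d : ℕ | 0 < d ∧ (d : ℤ) ^ b1 ∣ a ∧ (d : ℤ) ^ b2 ∣ c} with hS
  have hle : ∀ d ∈ S, d ∣ a.toNat := by
    rintro d ⟨_, h2, _⟩
    have : (d : ℤ) ∣ a := (dvd_pow_self _ hb1.ne').trans h2
    rw [Int.natCast_dvd] at this
    have e : a.toNat = a.natAbs := by omega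
    rwa [e]
  have hbdd : BddAbove S := ⟨a.toNat, fun d hd => Nat.le_of_dvd (by omega) (hle d hd)⟩
  have h1S : 1 ∈ S := by simp [hS]
  set G := gcdb b1 b2 a c with hG
  have hGS : G ∈ S := Nat.sSup_mem ⟨1, h1S⟩ hbdd
  have hdiv : ∀ d, d ∈ S ↔ d ∣ G := by
    intro d
    constructor
    · intro hd
      have hl : Nat.lcm d G ∈ S := by
        obtain ⟨p1, p2, p3⟩ := hd
        obtain ⟨q1, q2, q3⟩ := hGS
        refine ⟨Nat.lcm_pos p1 q1, ?_, ?_⟩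
        · rw [natdvd, ← Nat.pow_lcm_pow]
          exact Nat.lcm_dvd ((natdvd _ _ _).1 p2) ((natdvd _ _ _).1 q2)
        · rw [natdvd, ← Nat.pow_lcm_pow]
          exact Nat.lcm_dvd ((natdvd _ _ _).1 p3) ((natdvd _ _ _).1 q3)
      have h2 : Nat.lcm d G ≤ G := le_csSup hbdd hl
      have h3 : Nat.lcm d G = G := le_antisymm h2 (Nat.le_of_dvd hl.1 (Nat.dvd_lcm_right _ _))
      rw [← h3]; exact Nat.dvd_lcm_left _ _
    · intro hd
      have hd' : (d : ℤ) ∣ G := by exact_mod_cast hd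
      exact ⟨Nat.pos_of_dvd_of_pos hd hGS.1, (pow_dvd_pow_of_dvd hd' _).trans hGS.2.1,
        (pow_dvd_pow_of_dvd hd' _).trans hGS.2.2⟩
  rw [← Finset.sum_filter]
  have hset : (a.toNat.divisors.filter (fun d : ℕ => (d : ℤ) ^ b1 ∣ a)).filter
      (fun d : ℕ => (d : ℤ) ^ b2 ∣ c) = G.divisors := by
    ext d
    simp only [Finset.mem_filter, Nat.mem_divisors]
    constructor
    · rintro ⟨⟨⟨h1, h2⟩, h3⟩, h4⟩
      exact ⟨(hdiv d).1 ⟨Nat.pos_of_dvd_of_pos h1 (by omega), h3, h4⟩, hGS.1.ne'⟩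
    · rintro ⟨h1, h2⟩
      have h := (hdiv d).2 h1
      exact ⟨⟨⟨hle d h, by omega⟩, h.2.1⟩, h.2.2⟩
  rw [hset]
  have := ArithmeticFunction.coe_mul_zeta_apply (f := ArithmeticFunction.moebius) (x := G)
  rw [ArithmeticFunction.moebius_mul_coe_zeta, ArithmeticFunction.one_apply] at this
  have h2 := congrArg (fun z : ℤ => (z : ℝ)) this
  push_cast at h2
  exact h2

lemma gcdb_coprime (b1 b2 : ℕ) (s1 s2 t1 t2 : ℤ) (h : gcdb b1 b2 (s1 - s2) (t1 - t2) = 1)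
    (n k : ℤ) (d e : ℕ) (hd : 0 < d)
    (h1 : (d : ℤ) ^ b1 ∣ n - s1) (h2 : (e : ℤ) ^ b1 ∣ n - s2)
    (h3 : (d : ℤ) ^ b2 ∣ k - t1) (h4 : (e : ℤ) ^ b2 ∣ k - t2) : Nat.Coprime d e := by
  have hbdd : BddAbove {d : ℕ | 0 < d ∧ (d : ℤ) ^ b1 ∣ (s1 - s2) ∧ (d : ℤ) ^ b2 ∣ (t1 - t2)} := by
    by_contra hn
    have : gcdb b1 b2 (s1 - s2) (t1 - t2) = 0 := by
      unfold gcdb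
      rw [Nat.sSup_of_not_bddAbove hn]
    omega
  have hg : 0 < Nat.gcd d e := Nat.gcd_pos_of_pos_left _ hd
  have gd : ((Nat.gcd d e : ℕ) : ℤ) ∣ d := by exact_mod_cast Nat.gcd_dvd_left d e
  have ge : ((Nat.gcd d e : ℕ) : ℤ) ∣ e := by exact_mod_cast Nat.gcd_dvd_right d e
  have hm : Nat.gcd d e ≤ gcdb b1 b2 (s1 - s2) (t1 - t2) := by
    apply le_csSup hbdd
    refine ⟨hg, ?_, ?_⟩
    · have := dvd_sub ((pow_dvd_pow_of_dvd ge b1).trans h2) ((pow_dvd_pow_of_dvd gd b1).trans h1)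
      rwa [show n - s2 - (n - s1) = s1 - s2 by ring] at this
    · have := dvd_sub ((pow_dvd_pow_of_dvd ge b2).trans h4) ((pow_dvd_pow_of_dvd gd b2).trans h3)
      rwa [show k - t2 - (k - t1) = t1 - t2 by ring] at this
  unfold Nat.Coprime
  omega

lemma crt_class (J b2 : ℕ) (t : Fin J → ℤ) (d : Fin J → ℕ) (hd : ∀ j, 0 < d j)
    (hc : ∀ j1 j2, j1 ≠ j2 → Nat.Coprime (d j1) (d j2)) :
    ∃ r < ∏ j, d j ^ b2, ∀ k : ℕ, (∀ j, (d j : ℤ) ^ b2 ∣ (k : ℤ) - t j) ↔ k % (∏ j, d j ^ b2) = r := by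
  have hp : ∀ j, 0 < d j ^ b2 := fun j => pow_pos (hd j) _
  obtain ⟨x, hx⟩ := Nat.chineseRemainderOfFinset (fun j => (t j % (d j ^ b2 : ℕ)).toNat)
    (fun j => d j ^ b2) Finset.univ (fun j _ => (hp j).ne')
    (fun i _ j _ hij => Nat.Coprime.pow _ _ (hc i j hij))
  have hx' : ∀ j, ((d j ^ b2 : ℕ) : ℤ) ∣ (x : ℤ) - t j := by
    intro j
    have h := hx j (Finset.mem_univ j)
    rw [← Int.natCast_modEq_iff] at h
    have hpj : ((d j ^ b2 : ℕ) : ℤ) ≠ 0 := by exact_mod_cast (hp j).ne'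
    rw [Int.toNat_of_nonneg (Int.emod_nonneg _ hpj)] at h
    have h2 := h.trans (Int.mod_modEq _ _)
    exact h2.symm.dvd
  have hD : 0 < ∏ j, d j ^ b2 := Finset.prod_pos (fun j _ => hp j)
  refine ⟨x % ∏ j, d j ^ b2, Nat.mod_lt _ hD, ?_⟩
  intro k
  have e : (∀ j, (d j : ℤ) ^ b2 ∣ (k : ℤ) - t j) ↔ ∀ j, ((d j ^ b2 : ℕ) : ℤ) ∣ (k : ℤ) - x := by
    apply forall_congr'
    intro j
    have h := hx' j
    have e1 : (k : ℤ) - t j = (k - x) + (x - t j) := by ring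
    rw [e1]
    push_cast at *
    exact (dvd_add_left h)
  rw [e]
  change _ ↔ k ≡ x [MOD _]
  rw [Nat.ModEq.comm, Nat.modEq_iff_dvd]
  constructor
  · intro h
    push_cast
    apply Finset.prod_dvd_of_coprime
    · intro i _ j _ hij
      have : Nat.Coprime (d i ^ b2) (d j ^ b2) := Nat.Coprime.pow _ _ (hc i j hij)
      have := Nat.isCoprime_iff_coprime.2 this
      push_cast at this
      exact this
    · intro j _
      have := h j
      push_cast at this
      exact this
  · intro h j
    refine dvd_trans ?_ h
    exact_mod_cast Finset.dvd_prod_of_mem (fun j => d j ^ b2) (Finset.mem_univ j)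

/-- Index set of tuples. -/
noncomputable def tup (b1 J : ℕ) (s : Fin J → ℤ) (n : ℤ) : Finset (Fin J → ℕ) :=
  Fintype.piFinset (fun j => (n - s j).toNat.divisors.filter (fun d : ℕ => (d : ℤ) ^ b1 ∣ n - s j))

lemma mem_tup {b1 J : ℕ} (hb1 : 0 < b1) {s : Fin J → ℤ} {n : ℤ} (hs : ∀ j, |s j| < n) (d : Fin J → ℕ) :
    d ∈ tup b1 J s n ↔ ∀ j, 0 < d j ∧ ((d j : ℤ)) ^ b1 ∣ n - s j := by
  unfold tup
  rw [Fintype.mem_piFinset]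
  apply forall_congr'
  intro j
  have hpos : 0 < n - s j := by have := abs_lt.1 (hs j); omega
  simp only [Finset.mem_filter, Nat.mem_divisors]
  constructor
  · rintro ⟨⟨h1, h2⟩, h3⟩
    exact ⟨Nat.pos_of_dvd_of_pos h1 (by omega), h3⟩
  · rintro ⟨h1, h2⟩
    refine ⟨⟨?_, by omega⟩, h2⟩
    have : (d j : ℤ) ∣ n - s j := (dvd_pow_self _ hb1.ne').trans h2
    rw [Int.natCast_dvd] at this
    have e : (n - s j).toNat = (n - s j).natAbs := by omega
    rwa [e]

lemma fbs_eq {b1 b2 J : ℕ} (hb1 : 0 < b1) {s : Fin J → ℤ} {n : ℤ} (hs : ∀ j, |s j| < n) :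
    fbs b1 b2 J s n = ∑ d ∈ tup b1 J s n,
      if (∀ j1 j2, j1 ≠ j2 → Nat.Coprime (d j1) (d j2)) then
        (∏ j, (ArithmeticFunction.moebius (d j) : ℝ)) / (∏ j, (d j : ℝ)) ^ b2 else 0 := by
  unfold fbs
  rw [tsum_eq_sum (s := tup b1 J s n)]
  · apply Finset.sum_congr rfl
    intro d hd
    have := (mem_tup hb1 hs d).1 hd
    simp only [this, implies_true, true_and]
  · intro d hd
    rw [if_neg]
    rintro ⟨h, _⟩
    exact hd ((mem_tup hb1 hs d).2 h)

lemma lhs_eq {b1 b2 J : ℕ} (hb1 : 0 < b1) {s t : Fin J → ℤ} {n : ℤ} (hs : ∀ j, |s j| < n)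
    (w : ℕ → ℝ) (m : ℕ) :
    ∑ k ∈ (range (m + 1)).filter
            (fun k : ℕ => ∀ j, gcdb b1 b2 (n - s j) ((k : ℤ) - t j) = 1), w k
      = ∑ d ∈ tup b1 J s n, (∏ j, (ArithmeticFunction.moebius (d j) : ℝ)) *
          ∑ k ∈ range (m + 1), if (∀ j, (d j : ℤ) ^ b2 ∣ (k : ℤ) - t j) then w k else 0 := by
  rw [Finset.sum_filter]
  simp_rw [Finset.mul_sum]
  rw [Finset.sum_comm]
  apply Finset.sum_congr rfl
  intro k _
  have h1 : (if ∀ j, gcdb b1 b2 (n - s j) ((k : ℤ) - t j) = 1 then w k else 0) =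
      w k * ∏ j, (if gcdb b1 b2 (n - s j) ((k : ℤ) - t j) = 1 then (1 : ℝ) else 0) := by
    rw [Finset.prod_ite_zero]
    simp
  rw [h1]
  have h2 : ∀ j, (if gcdb b1 b2 (n - s j) ((k : ℤ) - t j) = 1 then (1 : ℝ) else 0) = _ := fun j =>
    gcdb_indicator b1 b2 hb1 (n - s j) ((k : ℤ) - t j) (by have := abs_lt.1 (hs j); omega)
  rw [Finset.prod_congr rfl (fun j _ => h2 j), Finset.prod_univ_sum, Finset.mul_sum]
  apply Finset.sum_congr rfl
  intro d _
  rw [Finset.prod_ite_zero]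
  simp only [Finset.mem_univ, true_imp_iff]
  split_ifs <;> ring

lemma abs_prod_moebius {J : ℕ} (d : Fin J → ℕ) :
    |∏ j, (ArithmeticFunction.moebius (d j) : ℝ)| ≤ 1 := by
  rw [Finset.abs_prod]
  apply Finset.prod_le_one
  · intros; exact abs_nonneg _
  · intro j _
    exact_mod_cast (ArithmeticFunction.abs_moebius_le_one (n := d j))

theorem stmt_16 (b1 b2 J : ℕ) (hb1 : 0 < b1) (hb2 : 0 < b2) (hJ : 1 ≤ J)
    (α : ℝ) (hα0 : 0 < α) (hα1 : α < 1) (ε : ℝ) (hε : 0 < ε) :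
    ∃ C > 0, ∀ (m : ℕ), 1 ≤ m → ∀ (n : ℤ) (s t : Fin J → ℤ),
      (∀ j1 j2, j1 ≠ j2 → gcdb b1 b2 (s j1 - s j2) (t j1 - t j2) = 1) →
      (∀ j, |s j| < n) →
      |(∑ k ∈ (range (m + 1)).filter
            (fun k : ℕ => ∀ j, gcdb b1 b2 (n - s j) ((k : ℤ) - t j) = 1),
          (m.choose k : ℝ) * α ^ k * (1 - α) ^ (m - k)) - fbs b1 b2 J s n|
        ≤ C * (n : ℝ) ^ ε * (m : ℝ) ^ (-(1 : ℝ) / 2) := by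
  have hJ0 : (0 : ℝ) < J := by exact_mod_cast hJ
  have hb : 0 < 1 - α := by linarith
  obtain ⟨C, hC, hdb⟩ := divisor_bound (ε / J) (by positivity)
  refine ⟨C ^ J * 2 ^ ε * (1 / (α * (1 - α))), by positivity, ?_⟩
  intro m hm n s t hst hs
  have hn : 0 < n := lt_of_le_of_lt (abs_nonneg _) (hs ⟨0, hJ⟩)
  have hn' : (0 : ℝ) < n := by exact_mod_cast hn
  set E : ℝ := 1 / (α * (1 - α)) * (m : ℝ) ^ (-(1 : ℝ) / 2) with hE
  have hE0 : 0 ≤ E := by positivity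
  have hl := lhs_eq (b2 := b2) (t := t) hb1 hs (binW α m) m
  unfold binW at hl
  rw [hl, fbs_eq hb1 hs, ← Finset.sum_sub_distrib]
  have hterm : ∀ d ∈ tup b1 J s n, |(∏ j, (ArithmeticFunction.moebius (d j) : ℝ)) *
          (∑ k ∈ range (m + 1), if (∀ j, (d j : ℤ) ^ b2 ∣ (k : ℤ) - t j) then
            (m.choose k : ℝ) * α ^ k * (1 - α) ^ (m - k) else 0) -
        (if (∀ j1 j2, j1 ≠ j2 → Nat.Coprime (d j1) (d j2)) then
        (∏ j, (ArithmeticFunction.moebius (d j) : ℝ)) / (∏ j, (d j : ℝ)) ^ b2 else 0)| ≤ E := by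
    intro d hd
    have hd' := (mem_tup hb1 hs d).1 hd
    split_ifs with hc
    · obtain ⟨r, hr, hk⟩ := crt_class J b2 t d (fun j => (hd' j).1) hc
      simp_rw [hk]
      have := binW_AP hα0 hα1 m hm _ r hr
      unfold binW at this
      rw [← hE] at this
      have eD : ((∏ j, d j ^ b2 : ℕ) : ℝ) = (∏ j, (d j : ℝ)) ^ b2 := by
        push_cast; rw [Finset.prod_pow]
      rw [eD] at this
      rw [div_eq_mul_one_div, ← mul_sub, abs_mul]
      calc _ ≤ 1 * E := mul_le_mul (abs_prod_moebius d) this (abs_nonneg _) zero_le_one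
        _ = E := one_mul _
    · rw [Finset.sum_eq_zero]
      · simpa using hE0
      · intro k _
        rw [if_neg]
        intro hdk
        apply hc
        intro j1 j2 hj
        exact gcdb_coprime b1 b2 _ _ _ _ (hst j1 j2 hj) n k _ _ (hd' j1).1 (hd' j1).2 (hd' j2).2
          (hdk j1) (hdk j2)
  refine (Finset.abs_sum_le_sum_abs _ _).trans ?_
  refine (Finset.sum_le_card_nsmul _ _ E hterm).trans ?_
  have hcard : ((tup b1 J s n).card : ℝ) ≤ C ^ J * 2 ^ ε * (n : ℝ) ^ ε := by
    unfold tup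
    rw [Fintype.card_piFinset]
    push_cast
    calc _ ≤ ∏ j : Fin J, (C * (2 * (n : ℝ)) ^ (ε / J)) := by
          apply Finset.prod_le_prod
          · intros; positivity
          · intro j _
            have hj := abs_lt.1 (hs j)
            have h1 := hdb (n - s j).toNat (by omega)
            have h2 : (((n - s j).toNat : ℕ) : ℝ) ≤ 2 * n := by
              have : (((n - s j).toNat : ℕ) : ℤ) ≤ 2 * n := by omega
              exact_mod_cast this
            refine le_trans ?_ (h1.trans ?_)
            · exact_mod_cast Finset.card_filter_le _ _
            · gcongr
      _ = C ^ J * 2 ^ ε * (n : ℝ) ^ ε := by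
          rw [Finset.prod_const, Finset.card_univ, Fintype.card_fin, mul_pow, ← Real.rpow_natCast (_ ^ (ε / J)),
            ← Real.rpow_mul (by positivity), div_mul_cancel₀ _ hJ0.ne',
            Real.mul_rpow (by norm_num) hn'.le]
          ring
  rw [nsmul_eq_mul]
  calc _ ≤ C ^ J * 2 ^ ε * (n : ℝ) ^ ε * E := by gcongr
    _ = _ := by rw [hE]; ring
end
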